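/- arXiv:2304.07664 — 7 statements merged into one kernel-verified Lean document; each statement's English description precedes it below -/
import Mathlib

section
/- For every real number M > 1 and every x with 0 < x < 1, one has 1 - (1 - x^M)^(2^M) > (1 - (1 - x)^M)^(2^M), where all powers are real powers. -/
/-!
The claim is `(1 - x ^ M) ^ N + (1 - (1 - x) ^ M) ^ N < 1` with `N = 2 ^ M`. It is symmetric under
`x ↦ 1 - x`, so let `x ≤ 1/2` and put `s = (2 * x) ^ M ∈ (0, 1]`. Since `N * x ^ M = s`, the first
term is at most `exp (-s)`, hence at most `1 - (1 - e⁻¹) * s` by convexity. The quotient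
`(1 - (1 - u) ^ M) ^ N / u ^ M` is monotone on `(0, 1/2]`, so comparing `x` with `1/2` bounds the
second term by `s * (1 - 1/N) ^ N ≤ e⁻¹ * s`. As `2 * e⁻¹ < 1`, the sum is less than `1`.

The sign of the logarithmic derivative reduces the monotonicity to
`(1 - u) ^ (1 - M) ≤ 1 + (N - 1) * u`. For `M ≤ 1` the left side is at most `1`; for `M ≥ 1` it is
convex in `u`, hence on `[0, 1/2]` below its chord `1 + (N - 2) * u`.
-/

open Real Set

lemma convexOn_rpow_of_nonpos {p : ℝ} (hp : p ≤ 0) : ConvexOn ℝ (Ioi 0) fun y : ℝ => y ^ p := by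
  refine ⟨convex_Ioi 0, fun x (hx : 0 < x) y (hy : 0 < y) a b ha hb hab => ?_⟩
  simp only [smul_eq_mul]
  calc (a * x + b * y) ^ p ≤ (x ^ a * y ^ b) ^ p :=
        rpow_le_rpow_of_nonpos (by positivity)
          (geom_mean_le_arith_mean2_weighted ha hb hx.le hy.le hab) hp
    _ = (x ^ p) ^ a * (y ^ p) ^ b := by
        rw [mul_rpow (by positivity) (by positivity), ← rpow_mul hx.le, ← rpow_mul hy.le,
          ← rpow_mul hx.le, ← rpow_mul hy.le, mul_comm a, mul_comm b]
    _ ≤ a * x ^ p + b * y ^ p :=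
        geom_mean_le_arith_mean2_weighted ha hb (by positivity) (by positivity) hab

lemma one_sub_rpow_le_exp_neg_mul {t r : ℝ} (ht : t ≤ 1) (hr : 0 ≤ r) :
    (1 - t) ^ r ≤ exp (-(r * t)) :=
  calc (1 - t) ^ r ≤ exp (-t) ^ r := rpow_le_rpow (sub_nonneg.2 ht) (one_sub_le_exp_neg t) hr
    _ = exp (-(r * t)) := by rw [← exp_mul, neg_mul, mul_comm]

lemma exp_neg_le_one_sub_mul {s : ℝ} (hs₀ : 0 ≤ s) (hs₁ : s ≤ 1) :
    exp (-s) ≤ 1 - (1 - exp (-1)) * s := by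
  have chord := convexOn_exp.2 (mem_univ 0) (mem_univ (-1)) (sub_nonneg.2 hs₁) hs₀
    (sub_add_cancel 1 s)
  simp only [smul_eq_mul, mul_zero, mul_neg, mul_one, zero_add, exp_zero] at chord
  linarith

lemma monotoneOn_rpow_div_rpow {f f' : ℝ → ℝ} {S : Set ℝ} {a b : ℝ} (hS : Convex ℝ S)
    (hS_pos : ∀ u ∈ S, 0 < u) (hf_pos : ∀ u ∈ S, 0 < f u) (hf : ContinuousOn f S)
    (hf' : ∀ u ∈ interior S, HasDerivWithinAt f (f' u) (interior S) u)
    (h : ∀ u ∈ interior S, b * f u ≤ a * (u * f' u)) :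
    MonotoneOn (fun u => f u ^ a / u ^ b) S := by
  have log_mono : MonotoneOn (fun u => a * log (f u) - b * log u) S := by
    refine monotoneOn_of_hasDerivWithinAt_nonneg (f' := fun u => a * (f' u / f u) - b * u⁻¹) hS
      ?_ (fun u hu => ?_) (fun u hu => ?_)
    · exact ((hf.log fun u hu => (hf_pos u hu).ne').const_mul a).sub
        ((continuousOn_id.log fun u hu => (hS_pos u hu).ne').const_mul b)
    · have hu' := interior_subset hu
      exact (((hf' u hu).log (hf_pos u hu').ne').const_mul a).sub
        ((hasDerivAt_log (hS_pos u hu').ne').hasDerivWithinAt.const_mul b)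
    · have hu₀ := hS_pos u (interior_subset hu)
      have hfu := hf_pos u (interior_subset hu)
      have : a * (f' u / f u) - b * u⁻¹ = (a * (u * f' u) - b * f u) / (u * f u) := by
        field_simp
      rw [this]
      exact div_nonneg (sub_nonneg.2 (h u hu)) (by positivity)
  refine (exp_monotone.comp_monotoneOn log_mono).congr fun u hu => ?_
  simp only [Function.comp_apply, exp_sub, rpow_def_of_pos (hf_pos u hu),
    rpow_def_of_pos (hS_pos u hu), mul_comm]

section

variable {M u x : ℝ}

lemma one_sub_rpow_one_sub_le (hu₀ : 0 ≤ u) (hu : u ≤ 1 / 2) (hM : 0 ≤ M) :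
    (1 - u) ^ (1 - M) ≤ 1 + (2 ^ M - 1) * u := by
  rcases le_total M 1 with hM₁ | hM₁
  · calc (1 - u) ^ (1 - M) ≤ 1 := rpow_le_one (by linarith) (by linarith) (by linarith)
      _ ≤ 1 + (2 ^ M - 1) * u :=
        le_add_of_nonneg_right (mul_nonneg (sub_nonneg.2 (one_le_rpow one_le_two hM)) hu₀)
  · have chord := (convexOn_rpow_of_nonpos (sub_nonpos.2 hM₁)).2 (mem_Ioi.2 one_pos)
      (mem_Ioi.2 one_half_pos) (by linarith : 0 ≤ 1 - 2 * u) (by linarith : 0 ≤ 2 * u) (by ring)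
    have half_rpow : (1 / 2 : ℝ) ^ (1 - M) = 2 ^ M / 2 := by
      rw [one_div, inv_rpow zero_le_two, ← rpow_neg zero_le_two, neg_sub,
        rpow_sub_one two_ne_zero]
    simp only [smul_eq_mul, one_rpow, half_rpow] at chord
    calc (1 - u) ^ (1 - M) = ((1 - 2 * u) * 1 + 2 * u * (1 / 2)) ^ (1 - M) := by ring_nf
      _ ≤ 1 + (2 ^ M - 1) * u := by linarith

lemma one_sub_one_sub_rpow_le (hu₀ : 0 ≤ u) (hu : u ≤ 1 / 2) (hM : 0 ≤ M) :
    1 - (1 - u) ^ M ≤ 2 ^ M * (u * (1 - u) ^ (M - 1)) := by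
  have hy : 0 < 1 - u := by linarith
  have key : (1 - u) ^ (M - 1) * (1 - u) ^ (1 - M) ≤
      (1 - u) ^ (M - 1) * (1 + (2 ^ M - 1) * u) := by
    gcongr
    exact one_sub_rpow_one_sub_le hu₀ hu hM
  have hinv : (1 - u) ^ (M - 1) * (1 - u) ^ (1 - M) = 1 := by
    rw [← rpow_add hy, sub_add_sub_cancel, sub_self, rpow_zero]
  have hmul : (1 - u) ^ M = (1 - u) ^ (M - 1) * (1 - u) := by
    rw [← rpow_add_one hy.ne', sub_add_cancel]
  linarith

lemma one_sub_one_sub_rpow_pos (hM : 0 < M) (hu₀ : 0 < u) (hu : u ≤ 1) : 0 < 1 - (1 - u) ^ M :=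
  sub_pos.2 (rpow_lt_one (sub_nonneg.2 hu) (sub_lt_self 1 hu₀) hM)

lemma hasDerivAt_one_sub_one_sub_rpow (hu : u < 1) :
    HasDerivAt (fun v : ℝ => 1 - (1 - v) ^ M) (M * (1 - u) ^ (M - 1)) u := by
  simpa using (((hasDerivAt_id u).const_sub 1).rpow_const (p := M)
    (Or.inl (sub_pos.2 hu).ne')).const_sub 1

lemma monotoneOn_one_sub_one_sub_rpow_rpow_div_rpow (hM : 0 < M) :
    MonotoneOn (fun u : ℝ => (1 - (1 - u) ^ M) ^ (2 ^ M : ℝ) / u ^ M) (Ioc 0 (1 / 2)) := by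
  have hderiv : ∀ u ∈ Ioc (0 : ℝ) (1 / 2),
      HasDerivAt (fun v : ℝ => 1 - (1 - v) ^ M) (M * (1 - u) ^ (M - 1)) u :=
    fun u hu => hasDerivAt_one_sub_one_sub_rpow (by linarith [hu.2])
  refine monotoneOn_rpow_div_rpow (convex_Ioc 0 (1 / 2)) (fun u hu => hu.1)
    (fun u hu => one_sub_one_sub_rpow_pos hM hu.1 (by linarith [hu.2]))
    (fun u hu => (hderiv u hu).continuousAt.continuousWithinAt)
    (fun u hu => (hderiv u (interior_subset hu)).hasDerivWithinAt) fun u hu => ?_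
  obtain ⟨hu₀, hu₁⟩ := interior_subset hu
  calc M * (1 - (1 - u) ^ M) ≤ M * (2 ^ M * (u * (1 - u) ^ (M - 1))) := by
        gcongr
        exact one_sub_one_sub_rpow_le hu₀.le hu₁ hM.le
    _ = 2 ^ M * (u * (M * (1 - u) ^ (M - 1))) := by ring

lemma one_sub_rpow_two_rpow_le (hM : 0 ≤ M) (hx₀ : 0 ≤ x) (hx : x ≤ 1 / 2) :
    (1 - x ^ M) ^ (2 ^ M : ℝ) ≤ 1 - (1 - exp (-1)) * (2 * x) ^ M :=
  calc (1 - x ^ M) ^ (2 ^ M : ℝ) ≤ exp (-(2 ^ M * x ^ M)) :=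
        one_sub_rpow_le_exp_neg_mul (rpow_le_one hx₀ (by linarith) hM) (by positivity)
    _ = exp (-(2 * x) ^ M) := by rw [mul_rpow zero_le_two hx₀]
    _ ≤ 1 - (1 - exp (-1)) * (2 * x) ^ M :=
        exp_neg_le_one_sub_mul (by positivity) (rpow_le_one (by positivity) (by linarith) hM)

lemma one_sub_one_sub_rpow_two_rpow_le (hM : 0 < M) (hx₀ : 0 < x) (hx : x ≤ 1 / 2) :
    (1 - (1 - x) ^ M) ^ (2 ^ M : ℝ) ≤ exp (-1) * (2 * x) ^ M := by
  have hinv : (2 : ℝ) ^ M * (1 / 2) ^ M = 1 := by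
    rw [← mul_rpow zero_le_two one_half_pos.le, mul_one_div_cancel two_ne_zero, one_rpow]
  have at_half : (1 - (1 / 2 : ℝ) ^ M) ^ (2 ^ M : ℝ) ≤ exp (-1) := by
    simpa only [hinv] using one_sub_rpow_le_exp_neg_mul
      (rpow_le_one one_half_pos.le one_half_lt_one.le hM.le) (rpow_nonneg zero_le_two M)
  have ratio_le : (1 - (1 - x) ^ M) ^ (2 ^ M : ℝ) / x ^ M ≤
      (1 - (1 / 2 : ℝ) ^ M) ^ (2 ^ M : ℝ) / (1 / 2) ^ M := by
    simpa only [sub_half] using monotoneOn_one_sub_one_sub_rpow_rpow_div_rpow hM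
      ⟨hx₀, hx⟩ ⟨one_half_pos, le_rfl⟩ hx
  calc (1 - (1 - x) ^ M) ^ (2 ^ M : ℝ)
      ≤ (1 - (1 / 2 : ℝ) ^ M) ^ (2 ^ M : ℝ) / (1 / 2) ^ M * x ^ M :=
        (div_le_iff₀ (by positivity)).1 ratio_le
    _ = (1 - (1 / 2 : ℝ) ^ M) ^ (2 ^ M : ℝ) * (2 * x) ^ M := by
        rw [div_eq_mul_inv, ← eq_inv_of_mul_eq_one_left hinv, mul_assoc,
          mul_rpow zero_le_two hx₀.le]
    _ ≤ exp (-1) * (2 * x) ^ M := by gcongr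

lemma one_sub_rpow_two_rpow_add_lt_one_of_le_half (hM : 0 < M) (hx₀ : 0 < x) (hx : x ≤ 1 / 2) :
    (1 - x ^ M) ^ (2 ^ M : ℝ) + (1 - (1 - x) ^ M) ^ (2 ^ M : ℝ) < 1 := by
  have first_le := one_sub_rpow_two_rpow_le hM.le hx₀.le hx
  have second_le := one_sub_one_sub_rpow_two_rpow_le hM hx₀ hx
  have gap : 0 < (1 - 2 * exp (-1)) * (2 * x) ^ M :=
    mul_pos (by linarith [exp_neg_one_lt_half]) (by positivity)
  linarith

end

theorem stmt_0_general {M x : ℝ} (hM : 0 < M) (hx₀ : 0 < x) (hx₁ : x < 1) :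
    1 - (1 - x ^ M) ^ ((2 : ℝ) ^ M) > (1 - (1 - x) ^ M) ^ ((2 : ℝ) ^ M) := by
  rcases le_total x (1 / 2) with hx | hx
  · linarith [one_sub_rpow_two_rpow_add_lt_one_of_le_half hM hx₀ hx]
  · have reflected := one_sub_rpow_two_rpow_add_lt_one_of_le_half hM (sub_pos.2 hx₁) (by linarith)
    rw [sub_sub_cancel] at reflected
    linarith

/-- For every real `M > 1` and every `x` with `0 < x < 1`,
`1 - (1 - x^M)^(2^M) > (1 - (1 - x)^M)^(2^M)`, all powers being real powers. -/
theorem stmt_0 (M x : ℝ) (hM : 1 < M) (hx0 : 0 < x) (hx1 : x < 1) :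
    1 - (1 - x ^ M) ^ ((2 : ℝ) ^ M) > (1 - (1 - x) ^ M) ^ ((2 : ℝ) ^ M) :=
  stmt_0_general (zero_lt_one.trans hM) hx0 hx1
end

section
/- Let m and n be positive real numbers. Then the inequality 1 - (1 - x^(2^m))^(2^n) ≥ (1 - (1 - x)^(2^m))^(2^n) holds for all x ∈ [0,1] if and only if (1 - 2^(-2^m))^(2^n) ≤ 1/2. -/
/-!
Put `a = 2 ^ m`, `b = 2 ^ n`, `S x = (1 - x ^ a) ^ b` and `h x = S x + S (1 - x)`. The inequality
says `h ≤ 1` on `[0, 1]`, and the condition on the right says `h (1 / 2) ≤ 1`. Since `h` is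
symmetric about `1 / 2` and `h 0 = 1`, sufficiency follows once `h` is quasiconvex on `[0, 1 / 2]`.

Let `φ` be the logarithm of `-S' / (a * b)`. The sign of `h'` is opposite to that of
`ψ x = φ x - φ (1 - x)`, and `ψ (1 / 2) = 0`, so it is enough that `ψ` is quasiconvex on
`(0, 1 / 2]`. Now `x * (1 - x) * ψ' x = (a - 1) - (b - 1) * a * (w x + w (1 - x))` with
`w y = (1 - y) * y ^ a / (1 - y ^ a)`, and `(a - 1) * w` is convex on `(0, 1)`; hence
`(a - 1) * (w x + w (1 - x))` decreases up to `1 / 2`. If `a - 1` and `b - 1` have the same sign,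
this makes `x * (1 - x) * ψ' x` increasing, and otherwise `ψ'` has a constant sign; in both cases
`ψ'` can only change sign from negative to positive. With `y = exp (-2 * t)`, the convexity of
`(a - 1) * w` is the comparison of `a * coth (a * t)` with `coth t`.
-/

open Set

section Convexity

lemma map_add_map_reflect_le_of_convexOn {𝕜 E β : Type*} [CommRing 𝕜] [PartialOrder 𝕜]
    [AddCommGroup E] [Module 𝕜 E] [AddCommMonoid β] [PartialOrder β] [IsOrderedAddMonoid β]
    [Module 𝕜 β] {s : Set E} {f : E → β} (hf : ConvexOn 𝕜 s f) {x y z : E} (hx : x ∈ s)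
    (hy : y ∈ s) (hz : z ∈ segment 𝕜 x y) : f z + f (x + y - z) ≤ f x + f y := by
  obtain ⟨p, q, hp, hq, hpq, rfl⟩ := hz
  have hreflect : x + y - (p • x + q • y) = q • x + p • y := by
    obtain rfl : q = 1 - p := eq_sub_of_add_eq' hpq
    module
  calc
    f (p • x + q • y) + f (x + y - (p • x + q • y))
      ≤ (p • f x + q • f y) + (q • f x + p • f y) :=
        add_le_add (hf.2 hx hy hp hq hpq)
          (hreflect ▸ hf.2 hx hy hq hp (add_comm p q ▸ hpq))
    _ = (p + q) • (f x + f y) := by module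
    _ = f x + f y := by rw [hpq, one_smul]

lemma quasiconvexOn_of_hasDerivAt_sign {s : Set ℝ} (hs : Convex ℝ s) {f f' : ℝ → ℝ}
    (hf : ContinuousOn f s) (hf' : ∀ x ∈ interior s, HasDerivAt f (f' x) x)
    (hsign : ∀ x ∈ interior s, ∀ y ∈ interior s, x < y → 0 < f' x → 0 ≤ f' y) :
    QuasiconvexOn ℝ s f := by
  refine fun r => OrdConnected.convex ⟨fun x hx y hy z hz => ?_⟩
  have hsub : Icc x y ⊆ s := hs.ordConnected.out hx.1 hy.1
  have hint : Ioo x y ⊆ interior s := interior_maximal (Ioo_subset_Icc_self.trans hsub) isOpen_Ioo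
  refine ⟨hsub hz, le_of_not_gt fun hlt => ?_⟩
  have hxz : x < z := hz.1.lt_of_ne fun h => hlt.not_ge (h ▸ hx.2)
  have hzy : z < y := hz.2.lt_of_ne fun h => hlt.not_ge (h ▸ hy.2)
  obtain ⟨c, hc, hslope_c⟩ := exists_hasDerivAt_eq_slope f f' hxz
    (hf.mono ((Icc_subset_Icc_right hz.2).trans hsub))
    fun u hu => hf' u (hint ⟨hu.1, hu.2.trans hzy⟩)
  obtain ⟨d, hd, hslope_d⟩ := exists_hasDerivAt_eq_slope f f' hzy
    (hf.mono ((Icc_subset_Icc_left hz.1).trans hsub))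
    fun u hu => hf' u (hint ⟨hxz.trans hu.1, hu.2⟩)
  have hc_pos : 0 < f' c :=
    hslope_c ▸ div_pos (sub_pos.2 (hx.2.trans_lt hlt)) (sub_pos.2 hxz)
  have hd_neg : f' d < 0 :=
    hslope_d ▸ div_neg_of_neg_of_pos (sub_neg.2 (hy.2.trans_lt hlt)) (sub_pos.2 hzy)
  exact hd_neg.not_ge (hsign c (hint ⟨hc.1, hc.2.trans hzy⟩) d (hint ⟨hxz.trans hd.1, hd.2⟩)
    (hc.2.trans hd.1) hc_pos)

lemma le_max_of_quasiconvexOn {𝕜 β : Type*} [Field 𝕜] [LinearOrder 𝕜] [IsStrictOrderedRing 𝕜]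
    [LinearOrder β] {s : Set 𝕜} {f : 𝕜 → β} (hf : QuasiconvexOn 𝕜 s f) {x y z : 𝕜}
    (hx : x ∈ s) (hy : y ∈ s) (hz : z ∈ Icc x y) : f z ≤ max (f x) (f y) :=
  ((hf _).ordConnected.out ⟨hx, le_max_left _ _⟩ ⟨hy, le_max_right _ _⟩ hz).2

end Convexity

section PowerInequalities

variable {a x y : ℝ}

lemma hasDerivAt_rpow_div (hx : 0 < x) : HasDerivAt (fun y : ℝ => y ^ a) (a * x ^ a / x) x := by
  have h := Real.hasDerivAt_rpow_const (x := x) (p := a) (Or.inl hx.ne')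
  rwa [Real.rpow_sub_one hx.ne', ← mul_div_assoc] at h

lemma one_sub_rpow_pos (ha : 0 < a) (hx : x ∈ Ioo (0 : ℝ) 1) : 0 < 1 - x ^ a :=
  sub_pos.2 (Real.rpow_lt_one hx.1.le hx.2 ha)

lemma mul_rpow_div_le (ha : 1 ≤ a) (hx : 0 < x) : a * x ^ a / x ≤ (a - 1) * x ^ a + 1 := by
  have hpow : 0 < x ^ a := Real.rpow_pos_of_pos hx a
  have bernoulli : 1 + a * (x⁻¹ - 1) ≤ (x ^ a)⁻¹ := by
    have h := one_add_mul_self_le_rpow_one_add (s := x⁻¹ - 1) (by linarith [inv_pos.2 hx]) ha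
    rwa [add_sub_cancel, Real.inv_rpow hx.le] at h
  calc
    a * x ^ a / x = (1 + a * (x⁻¹ - 1)) * x ^ a + (a - 1) * x ^ a := by ring
    _ ≤ (x ^ a)⁻¹ * x ^ a + (a - 1) * x ^ a := by gcongr
    _ = (a - 1) * x ^ a + 1 := by rw [inv_mul_cancel₀ hpow.ne', add_comm]

/-- With `y = exp (-2 * t)` this reads `coth t ≤ a * coth (a * t)`. -/
lemma one_add_mul_one_sub_rpow_le (ha : 1 ≤ a) (hy : y ∈ Ioc (0 : ℝ) 1) :
    (1 + y) * (1 - y ^ a) ≤ a * (1 + y ^ a) * (1 - y) := by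
  let D (x : ℝ) : ℝ := a * (1 + x ^ a) * (1 - x) - (1 + x) * (1 - x ^ a)
  have hD (x : ℝ) (hx : 0 < x) :
      HasDerivAt D ((a + 1) * (a * x ^ a / x - ((a - 1) * x ^ a + 1))) x := by
    have hpow := hasDerivAt_rpow_div (a := a) hx
    have hid := hasDerivAt_id' x
    refine ((((hpow.const_add 1).const_mul a).mul (hid.const_sub 1)).sub
      ((hid.const_add 1).mul (hpow.const_sub 1))).congr_deriv ?_
    field_simp
    ring
  have hanti : AntitoneOn D (Ioc 0 1) :=
    antitoneOn_of_hasDerivWithinAt_nonpos (convex_Ioc 0 1)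
      (fun x hx => (hD x hx.1).continuousAt.continuousWithinAt)
      (fun x hx => (hD x (interior_subset hx).1).hasDerivWithinAt)
      fun x hx => mul_nonpos_of_nonneg_of_nonpos (by linarith)
        (sub_nonpos.2 (mul_rpow_div_le ha (interior_subset hx).1))
  have hD_one : D 1 = 0 := by simp [D]
  exact sub_nonneg.1 (hD_one ▸ hanti hy (right_mem_Ioc.2 one_pos) hy.2)

lemma sub_one_mul_coth_sub_nonneg (ha : 0 < a) (hy : y ∈ Ioc (0 : ℝ) 1) :
    0 ≤ (a - 1) * (a * (1 + y ^ a) * (1 - y) - (1 + y) * (1 - y ^ a)) := by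
  rcases le_total 1 a with ha1 | ha1
  · exact mul_nonneg (sub_nonneg.2 ha1) (sub_nonneg.2 (one_add_mul_one_sub_rpow_le ha1 hy))
  · -- For `a ≤ 1` the comparison reverses, by substituting `y ^ a` for `y` and `a⁻¹` for `a`.
    have hinv := one_add_mul_one_sub_rpow_le ((one_le_inv₀ ha).2 ha1)
      (⟨Real.rpow_pos_of_pos hy.1 a, Real.rpow_le_one hy.1.le hy.2 ha.le⟩ : y ^ a ∈ Ioc (0 : ℝ) 1)
    rw [Real.rpow_rpow_inv hy.1.le ha.ne', mul_assoc, le_inv_mul_iff₀ ha, ← mul_assoc] at hinv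
    exact mul_nonneg_of_nonpos_of_nonpos (sub_nonpos.2 ha1) (sub_nonpos.2 hinv)

end PowerInequalities

section LogDensityWeight

variable {a y : ℝ}

/-- The weight `w` by which the factor `1 - y ^ a` enters the derivative of the log-density
`kumaraswamyLogDensity`. It is used on `(0, 1)`; at `1` the division returns a junk value. -/
noncomputable def logDensityWeight (a y : ℝ) : ℝ := (1 - y) * (y ^ a / (1 - y ^ a))

lemma logDensityWeight_pos (ha : 0 < a) (hy : y ∈ Ioo (0 : ℝ) 1) : 0 < logDensityWeight a y :=
  mul_pos (sub_pos.2 hy.2) (div_pos (Real.rpow_pos_of_pos hy.1 a) (one_sub_rpow_pos ha hy))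

lemma hasDerivAt_logDensityWeight (ha : 0 < a) (hy : y ∈ Ioo (0 : ℝ) 1) :
    HasDerivAt (logDensityWeight a)
      (-(y ^ a / (1 - y ^ a)) + (1 - y) * (a * y ^ a / (y * (1 - y ^ a) ^ 2))) y := by
  have hq := one_sub_rpow_pos ha hy
  have hy0 := hy.1
  have hpow := hasDerivAt_rpow_div (a := a) hy0
  refine (((hasDerivAt_id' y).const_sub 1).mul
    (hpow.div (hpow.const_sub 1) hq.ne')).congr_deriv ?_
  simp only [Pi.div_apply]
  field_simp
  ring

lemma hasDerivAt_deriv_logDensityWeight (ha : 0 < a) (hy : y ∈ Ioo (0 : ℝ) 1) :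
    HasDerivAt
      (fun y : ℝ => -(y ^ a / (1 - y ^ a)) + (1 - y) * (a * y ^ a / (y * (1 - y ^ a) ^ 2)))
      (a * y ^ a / (y ^ 2 * (1 - y ^ a) ^ 3) *
        (a * (1 + y ^ a) * (1 - y) - (1 + y) * (1 - y ^ a))) y := by
  have hq := one_sub_rpow_pos ha hy
  have hy0 := hy.1
  have hpow := hasDerivAt_rpow_div (a := a) hy0
  have hid := hasDerivAt_id' y
  refine ((hpow.div (hpow.const_sub 1) hq.ne').neg.add ((hid.const_sub 1).mul
    ((hpow.const_mul a).div (hid.mul ((hpow.const_sub 1).pow 2))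
      (mul_pos hy0 (pow_pos hq 2)).ne'))).congr_deriv ?_
  simp only [Pi.mul_apply, Pi.pow_apply, Pi.div_apply]
  field_simp
  ring

lemma convexOn_sub_one_mul_logDensityWeight (ha : 0 < a) :
    ConvexOn ℝ (Ioo 0 1) fun y => (a - 1) * logDensityWeight a y := by
  refine convexOn_of_hasDerivWithinAt2_nonneg (convex_Ioo 0 1)
    (fun y hy =>
      ((hasDerivAt_logDensityWeight ha hy).const_mul _).continuousAt.continuousWithinAt)
    (fun y hy =>
      ((hasDerivAt_logDensityWeight ha (interior_subset hy)).const_mul _).hasDerivWithinAt)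
    (fun y hy =>
      ((hasDerivAt_deriv_logDensityWeight ha (interior_subset hy)).const_mul _).hasDerivWithinAt)
    fun y hy => ?_
  replace hy : y ∈ Ioo (0 : ℝ) 1 := interior_subset hy
  have hfactor : 0 < a * y ^ a / (y ^ 2 * (1 - y ^ a) ^ 3) :=
    div_pos (mul_pos ha (Real.rpow_pos_of_pos hy.1 a))
      (mul_pos (pow_pos hy.1 2) (pow_pos (one_sub_rpow_pos ha hy) 3))
  rw [mul_left_comm]
  exact mul_nonneg hfactor.le (sub_one_mul_coth_sub_nonneg ha (Ioo_subset_Ioc_self hy))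

lemma antitoneOn_sub_one_mul_logDensityWeight_add_reflect (ha : 0 < a) :
    AntitoneOn (fun x => (a - 1) * (logDensityWeight a x + logDensityWeight a (1 - x)))
      (Ioc 0 (1 / 2)) := by
  intro x hx y hy hxy
  have hx1 : x ≤ 1 / 2 := hx.2
  have hy1 : y ≤ 1 / 2 := hy.2
  have hseg : y ∈ segment ℝ x (1 - x) := by
    rw [segment_eq_Icc (by linarith)]
    exact ⟨hxy, by linarith⟩
  have h := map_add_map_reflect_le_of_convexOn (convexOn_sub_one_mul_logDensityWeight ha)
    ⟨hx.1, by linarith⟩ ⟨by linarith, by linarith [hx.1]⟩ hseg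
  rw [add_sub_cancel] at h
  simpa only [mul_add] using h

end LogDensityWeight

section Kumaraswamy

variable {a b x y : ℝ}

/-- The survival function `S` of the Kumaraswamy distribution on `[0, 1]` with shape parameters
`a` and `b`. -/
noncomputable def kumaraswamySurvival (a b x : ℝ) : ℝ := (1 - x ^ a) ^ b

/-- The logarithm `φ` of the density of the Kumaraswamy distribution on `(0, 1)`, up to the
additive constant `log (a * b)`. -/
noncomputable def kumaraswamyLogDensity (a b x : ℝ) : ℝ :=
  (a - 1) * Real.log x + (b - 1) * Real.log (1 - x ^ a)

/-- The log-likelihood ratio `ψ` between the Kumaraswamy distribution and its reflection in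
`1 / 2`. -/
noncomputable def kumaraswamyLogRatio (a b x : ℝ) : ℝ :=
  kumaraswamyLogDensity a b x - kumaraswamyLogDensity a b (1 - x)

lemma one_sub_mem_Ioo (hx : x ∈ Ioo (0 : ℝ) 1) : 1 - x ∈ Ioo (0 : ℝ) 1 :=
  ⟨sub_pos.2 hx.2, sub_lt_self 1 hx.1⟩

lemma continuous_kumaraswamySurvival (ha : 0 ≤ a) (hb : 0 ≤ b) :
    Continuous (kumaraswamySurvival a b) :=
  (Real.continuous_rpow_const hb).comp (continuous_const.sub (Real.continuous_rpow_const ha))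

lemma kumaraswamySurvival_zero (ha : a ≠ 0) : kumaraswamySurvival a b 0 = 1 := by
  simp [kumaraswamySurvival, Real.zero_rpow ha]

lemma kumaraswamySurvival_one (hb : b ≠ 0) : kumaraswamySurvival a b 1 = 0 := by
  simp [kumaraswamySurvival, Real.zero_rpow hb]

lemma kumaraswamyLogRatio_half : kumaraswamyLogRatio a b (1 / 2) = 0 := by
  rw [kumaraswamyLogRatio, sub_half, sub_self]

lemma exp_kumaraswamyLogDensity (ha : 0 < a) (hx : x ∈ Ioo (0 : ℝ) 1) :
    Real.exp (kumaraswamyLogDensity a b x) = x ^ (a - 1) * (1 - x ^ a) ^ (b - 1) := by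
  rw [kumaraswamyLogDensity, Real.exp_add, mul_comm (a - 1), mul_comm (b - 1),
    ← Real.rpow_def_of_pos hx.1, ← Real.rpow_def_of_pos (one_sub_rpow_pos ha hx)]

lemma hasDerivAt_kumaraswamySurvival (ha : 0 < a) (hx : x ∈ Ioo (0 : ℝ) 1) :
    HasDerivAt (kumaraswamySurvival a b)
      (-(a * b * Real.exp (kumaraswamyLogDensity a b x))) x := by
  have hpow := Real.hasDerivAt_rpow_const (x := x) (p := a) (Or.inl hx.1.ne')
  refine ((hpow.const_sub 1).rpow_const (p := b)
    (Or.inl (one_sub_rpow_pos ha hx).ne')).congr_deriv ?_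
  rw [exp_kumaraswamyLogDensity ha hx]
  ring

lemma hasDerivAt_kumaraswamySurvival_add_reflect (ha : 0 < a) (hx : x ∈ Ioo (0 : ℝ) 1) :
    HasDerivAt (fun x => kumaraswamySurvival a b x + kumaraswamySurvival a b (1 - x))
      (a * b * (Real.exp (kumaraswamyLogDensity a b (1 - x)) -
        Real.exp (kumaraswamyLogDensity a b x))) x := by
  refine ((hasDerivAt_kumaraswamySurvival ha hx).add
    ((hasDerivAt_kumaraswamySurvival ha (one_sub_mem_Ioo hx)).comp_const_sub 1 x)).congr_deriv ?_
  ring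

lemma hasDerivAt_kumaraswamyLogDensity (ha : 0 < a) (hx : x ∈ Ioo (0 : ℝ) 1) :
    HasDerivAt (kumaraswamyLogDensity a b)
      (((a - 1) * (1 - x) - (b - 1) * a * logDensityWeight a x) / (x * (1 - x))) x := by
  have hq := one_sub_rpow_pos ha hx
  have hx0 := hx.1
  have hx1 : 0 < 1 - x := sub_pos.2 hx.2
  refine (((Real.hasDerivAt_log hx0.ne').const_mul (a - 1)).add
    ((((hasDerivAt_rpow_div hx0).const_sub 1).log hq.ne').const_mul (b - 1))).congr_deriv ?_
  rw [logDensityWeight]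
  field_simp
  ring

lemma hasDerivAt_kumaraswamyLogRatio (ha : 0 < a) (hx : x ∈ Ioo (0 : ℝ) 1) :
    HasDerivAt (kumaraswamyLogRatio a b)
      (((a - 1) - (b - 1) * a * (logDensityWeight a x + logDensityWeight a (1 - x))) /
        (x * (1 - x))) x := by
  have hx0 := hx.1
  have hx1 : 0 < 1 - x := sub_pos.2 hx.2
  refine ((hasDerivAt_kumaraswamyLogDensity ha hx).sub
    ((hasDerivAt_kumaraswamyLogDensity ha (one_sub_mem_Ioo hx)).comp_const_sub 1 x)).congr_deriv ?_
  rw [sub_sub_cancel]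
  field_simp
  ring

lemma kumaraswamyLogRatio_slope_nonneg_of_pos (ha : 0 < a) (hx : 0 < x) (hxy : x ≤ y)
    (hy : y ≤ 1 / 2)
    (hpos : 0 < (a - 1) - (b - 1) * a * (logDensityWeight a x + logDensityWeight a (1 - x))) :
    0 ≤ (a - 1) - (b - 1) * a * (logDensityWeight a y + logDensityWeight a (1 - y)) := by
  have hweight_pos (z : ℝ) (hz : z ∈ Ioo (0 : ℝ) 1) :
      0 < logDensityWeight a z + logDensityWeight a (1 - z) :=
    add_pos (logDensityWeight_pos ha hz) (logDensityWeight_pos ha (one_sub_mem_Ioo hz))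
  have hWx := hweight_pos x ⟨hx, by linarith⟩
  have hWy := hweight_pos y ⟨by linarith, by linarith⟩
  have hanti := antitoneOn_sub_one_mul_logDensityWeight_add_reflect ha
    ⟨hx, hxy.trans hy⟩ ⟨hx.trans_le hxy, hy⟩ hxy
  dsimp only at hanti
  generalize logDensityWeight a x + logDensityWeight a (1 - x) = Wx at *
  generalize logDensityWeight a y + logDensityWeight a (1 - y) = Wy at *
  rcases le_total 1 b with hb | hb
  · have hba : 0 ≤ (b - 1) * a := mul_nonneg (sub_nonneg.2 hb) ha.le
    have ha1 : 0 < a - 1 := by linarith [mul_nonneg hba hWx.le]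
    have hW : Wy ≤ Wx := le_of_mul_le_mul_left hanti ha1
    linarith [mul_le_mul_of_nonneg_left hW hba]
  · have hba : (b - 1) * a ≤ 0 := mul_nonpos_of_nonpos_of_nonneg (sub_nonpos.2 hb) ha.le
    rcases le_or_gt 1 a with ha1 | ha1
    · linarith [mul_nonpos_of_nonpos_of_nonneg hba hWy.le]
    · have hW : Wx ≤ Wy := (mul_le_mul_left_of_neg (sub_neg.2 ha1)).1 hanti
      linarith [mul_le_mul_of_nonpos_left hW hba]

lemma quasiconvexOn_kumaraswamyLogRatio (ha : 0 < a) :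
    QuasiconvexOn ℝ (Ioc 0 (1 / 2)) (kumaraswamyLogRatio a b) := by
  have hunit {x : ℝ} (hx : x ∈ Ioc (0 : ℝ) (1 / 2)) : x ∈ Ioo (0 : ℝ) 1 :=
    ⟨hx.1, hx.2.trans_lt one_half_lt_one⟩
  have hden {x : ℝ} (hx : x ∈ Ioc (0 : ℝ) (1 / 2)) : 0 < x * (1 - x) :=
    mul_pos hx.1 (sub_pos.2 (hunit hx).2)
  refine quasiconvexOn_of_hasDerivAt_sign (convex_Ioc 0 (1 / 2))
    (fun x hx => (hasDerivAt_kumaraswamyLogRatio ha (hunit hx)).continuousAt.continuousWithinAt)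
    (fun x hx => hasDerivAt_kumaraswamyLogRatio ha (hunit (interior_subset hx)))
    fun x hx y hy hxy hpos => ?_
  replace hx := interior_subset hx
  replace hy := interior_subset hy
  exact div_nonneg (kumaraswamyLogRatio_slope_nonneg_of_pos ha hx.1 hxy.le hy.2
    ((div_pos_iff_of_pos_right (hden hx)).1 hpos)) (hden hy).le

lemma kumaraswamyLogRatio_nonpos_of_nonpos (ha : 0 < a) (hx : 0 < x) (hxy : x ≤ y)
    (hy : y ≤ 1 / 2) (h : kumaraswamyLogRatio a b x ≤ 0) : kumaraswamyLogRatio a b y ≤ 0 :=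
  (le_max_of_quasiconvexOn (quasiconvexOn_kumaraswamyLogRatio ha) ⟨hx, hxy.trans hy⟩
    (right_mem_Ioc.2 one_half_pos) ⟨hxy, hy⟩).trans (max_le h kumaraswamyLogRatio_half.le)

lemma quasiconvexOn_kumaraswamySurvival_add_reflect (ha : 0 < a) (hb : 0 < b) :
    QuasiconvexOn ℝ (Icc 0 (1 / 2))
      fun x => kumaraswamySurvival a b x + kumaraswamySurvival a b (1 - x) := by
  have hab : 0 < a * b := mul_pos ha hb
  have hS := continuous_kumaraswamySurvival ha.le hb.le
  refine quasiconvexOn_of_hasDerivAt_sign (convex_Icc 0 (1 / 2))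
    (hS.add (hS.comp (continuous_const.sub continuous_id))).continuousOn
    (fun x hx => hasDerivAt_kumaraswamySurvival_add_reflect ha ?_) fun x hx y hy hxy hpos => ?_
  · rw [interior_Icc] at hx
    exact ⟨hx.1, hx.2.trans one_half_lt_one⟩
  · rw [interior_Icc] at hx hy
    rw [mul_pos_iff_of_pos_left hab, sub_pos, Real.exp_lt_exp, ← sub_neg] at hpos
    rw [mul_nonneg_iff_of_pos_left hab, sub_nonneg, Real.exp_le_exp, ← sub_nonpos]
    exact kumaraswamyLogRatio_nonpos_of_nonpos ha hx.1 hxy.le hy.2.le hpos.le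

theorem kumaraswamySurvival_add_reflect_le_one_iff (ha : 0 < a) (hb : 0 < b) :
    (∀ x ∈ Icc (0 : ℝ) 1, kumaraswamySurvival a b x + kumaraswamySurvival a b (1 - x) ≤ 1) ↔
      kumaraswamySurvival a b (1 / 2) ≤ 1 / 2 := by
  constructor
  · intro h
    have hhalf := h (1 / 2) ⟨by norm_num, by norm_num⟩
    rw [sub_half] at hhalf
    linarith
  · intro hhalf
    have hleft (x : ℝ) (hx : x ∈ Icc (0 : ℝ) (1 / 2)) :
        kumaraswamySurvival a b x + kumaraswamySurvival a b (1 - x) ≤ 1 := by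
      refine (le_max_of_quasiconvexOn (quasiconvexOn_kumaraswamySurvival_add_reflect ha hb)
        (left_mem_Icc.2 one_half_pos.le) (right_mem_Icc.2 one_half_pos.le) hx).trans (max_le ?_ ?_)
      · rw [sub_zero, kumaraswamySurvival_zero ha.ne', kumaraswamySurvival_one hb.ne', add_zero]
      · rw [sub_half]
        linarith
    rintro x ⟨hx0, hx1⟩
    rcases le_total x (1 / 2) with hx | hx
    · exact hleft x ⟨hx0, hx⟩
    · have h := hleft (1 - x) ⟨by linarith, by linarith⟩
      rwa [sub_sub_cancel, add_comm] at h

end Kumaraswamy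

theorem stmt_1_general (m n : ℝ) :
    (∀ x ∈ Set.Icc (0 : ℝ) 1,
        1 - (1 - x ^ ((2 : ℝ) ^ m)) ^ ((2 : ℝ) ^ n)
          ≥ (1 - (1 - x) ^ ((2 : ℝ) ^ m)) ^ ((2 : ℝ) ^ n))
      ↔ (1 - (2 : ℝ) ^ (-(2 : ℝ) ^ m)) ^ ((2 : ℝ) ^ n) ≤ 1 / 2 := by
  have hpow : (2 : ℝ) ^ (-(2 : ℝ) ^ m) = (1 / 2) ^ ((2 : ℝ) ^ m) := by
    rw [Real.rpow_neg_eq_inv_rpow, one_div]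
  have h := kumaraswamySurvival_add_reflect_le_one_iff
    (Real.rpow_pos_of_pos two_pos m) (Real.rpow_pos_of_pos two_pos n)
  simpa only [kumaraswamySurvival, hpow, ge_iff_le, le_sub_iff_add_le'] using h

/-- For positive reals `m, n`, the inequality
`1 - (1 - x^(2^m))^(2^n) ≥ (1 - (1 - x)^(2^m))^(2^n)` holds for all `x ∈ [0,1]`
iff `(1 - 2^(-2^m))^(2^n) ≤ 1/2`. -/
theorem stmt_1 (m n : ℝ) (hm : 0 < m) (hn : 0 < n) :
    (∀ x ∈ Set.Icc (0 : ℝ) 1,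
        1 - (1 - x ^ ((2 : ℝ) ^ m)) ^ ((2 : ℝ) ^ n)
          ≥ (1 - (1 - x) ^ ((2 : ℝ) ^ m)) ^ ((2 : ℝ) ^ n))
      ↔ (1 - (2 : ℝ) ^ (-(2 : ℝ) ^ m)) ^ ((2 : ℝ) ^ n) ≤ 1 / 2 :=
  stmt_1_general m n
end

section
/- For every positive integer m, setting M := 2^m, the inequality 1 - (1 - x^M)^(2^M) ≥ (1 - (1 - x)^M)^(2^M) holds for all x ∈ [0,1]. -/
/-!
Write `N = 2 ^ M`. The claim is `(1 - x ^ M) ^ N + (1 - (1 - x) ^ M) ^ N ≤ 1`. For `M ≤ 1` the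
summands are at most `1 - x` and `x`. For `1 ≤ M`, by the symmetry `x ↦ 1 - x` we may take
`x ≤ 1 / 2`, so that `A = N * x ^ M = (2 * x) ^ M ≤ 1`.

* Bernoulli's inequality gives `(1 - x ^ M) ^ N ≤ 1 / (1 + A) ≤ 1 - A / 2`.
* The quotient `(1 - (1 - x) ^ M) ^ N / x ^ M` is increasing on `(0, 1 / 2]`: the sign of its
  logarithmic derivative is controlled by the chord of the convex function `v ↦ v ^ M` over
  `[1, 2]`, evaluated at `v = 1 / (1 - x)`. Comparing with `x = 1 / 2` gives
  `(1 - (1 - x) ^ M) ^ N ≤ A * (1 - 1 / N) ^ N`, which is at most `A / 2` by Bernoulli again.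
-/

open Set

namespace WuSiegel

lemma one_sub_rpow_le_inv_one_add_mul {n t : ℝ} (hn : 1 ≤ n) (ht₀ : 0 ≤ t) (ht₁ : t ≤ 1) :
    (1 - t) ^ n ≤ (1 + n * t)⁻¹ := by
  have base_le : 1 - t ≤ (1 + t)⁻¹ := by
    rw [← one_div, le_div_iff₀ (by positivity)]
    nlinarith
  calc (1 - t) ^ n ≤ (1 + t)⁻¹ ^ n := by gcongr
    _ = ((1 + t) ^ n)⁻¹ := Real.inv_rpow (by positivity) n
    _ ≤ (1 + n * t)⁻¹ := by
      gcongr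
      exact one_add_mul_self_le_rpow_one_add (by linarith) hn

lemma one_sub_rpow_le_one_sub_mul_div_two {n t : ℝ} (hn : 1 ≤ n) (ht : 0 ≤ t) (hnt : n * t ≤ 1) :
    (1 - t) ^ n ≤ 1 - n * t / 2 := by
  have hnt₀ : 0 ≤ n * t := by positivity
  refine (one_sub_rpow_le_inv_one_add_mul hn ht (by nlinarith)).trans ?_
  rw [inv_le_iff_one_le_mul₀ (by positivity)]
  nlinarith

lemma rpow_sub_one_le_mul_sub_one {p v : ℝ} (hp : 1 ≤ p) (hv₁ : 1 ≤ v) (hv₂ : v ≤ 2) :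
    v ^ p - 1 ≤ (2 ^ p - 1) * (v - 1) := by
  have chord := (convexOn_rpow hp).2 (x := 1) (y := 2) (by simp) (by simp)
    (sub_nonneg.2 hv₂) (sub_nonneg.2 hv₁) (by ring)
  simp only [smul_eq_mul, Real.one_rpow] at chord
  rw [show (2 - v) * 1 + (v - 1) * 2 = v by ring] at chord
  linarith

lemma one_sub_rpow_le_mul_rpow_sub_one {p u : ℝ} (hp : 1 ≤ p) (hu₁ : 1 / 2 ≤ u) (hu₂ : u ≤ 1) :
    1 - u ^ p ≤ (2 ^ p - 1) * ((1 - u) * u ^ (p - 1)) := by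
  have hu : 0 < u := by linarith
  have chord : u⁻¹ ^ p - 1 ≤ (2 ^ p - 1) * (u⁻¹ - 1) :=
    rpow_sub_one_le_mul_sub_one hp ((one_le_inv₀ hu).2 hu₂)
      (inv_le_of_inv_le₀ two_pos (by linarith))
  calc 1 - u ^ p = u ^ p * (u⁻¹ ^ p - 1) := by
        rw [Real.inv_rpow hu.le]
        field_simp
    _ ≤ u ^ p * ((2 ^ p - 1) * (u⁻¹ - 1)) := by gcongr
    _ = (2 ^ p - 1) * ((1 - u) * u ^ (p - 1)) := by
        rw [Real.rpow_sub_one hu.ne']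
        field_simp

lemma monotoneOn_rpow_div_rpow {f f' : ℝ → ℝ} {a b : ℝ} {s : Set ℝ} (hs : Convex ℝ s)
    (hs_pos : ∀ x ∈ s, 0 < x) (hf_pos : ∀ x ∈ s, 0 < f x)
    (hf : ∀ x ∈ s, HasDerivAt f (f' x) x) (hff' : ∀ x ∈ s, b * f x ≤ a * (x * f' x)) :
    MonotoneOn (fun x ↦ f x ^ a / x ^ b) s := by
  have hderiv : ∀ x ∈ s, HasDerivAt (fun x ↦ a * Real.log (f x) - b * Real.log x)
      (a * (f' x / f x) - b * x⁻¹) x := fun x hx ↦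
    (((hf x hx).log (hf_pos x hx).ne').const_mul a).sub
      ((Real.hasDerivAt_log (hs_pos x hx).ne').const_mul b)
  have hlog : MonotoneOn (fun x ↦ a * Real.log (f x) - b * Real.log x) s := by
    refine monotoneOn_of_hasDerivWithinAt_nonneg hs
      (fun x hx ↦ (hderiv x hx).continuousAt.continuousWithinAt)
      (fun x hx ↦ (hderiv x (interior_subset hx)).hasDerivWithinAt) fun x hx ↦ ?_
    have hxs := interior_subset hx
    have hx₀ := hs_pos x hxs
    have hfx := hf_pos x hxs
    rw [show a * (f' x / f x) - b * x⁻¹ = (a * (x * f' x) - b * f x) / (f x * x) by field_simp]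
    exact div_nonneg (sub_nonneg.2 (hff' x hxs)) (by positivity)
  refine (Real.exp_monotone.comp_monotoneOn hlog).congr fun x hx ↦ ?_
  simp only [Function.comp_apply]
  rw [Real.exp_sub, Real.rpow_def_of_pos (hf_pos x hx), Real.rpow_def_of_pos (hs_pos x hx),
    mul_comm a, mul_comm b]

lemma monotoneOn_one_sub_one_sub_rpow_rpow_div_rpow {p : ℝ} (hp : 1 ≤ p) :
    MonotoneOn (fun x : ℝ ↦ (1 - (1 - x) ^ p) ^ (2 ^ p : ℝ) / x ^ p) (Ioc 0 (1 / 2)) := by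
  refine monotoneOn_rpow_div_rpow (f' := fun x ↦ p * (1 - x) ^ (p - 1)) (convex_Ioc _ _)
    (fun x hx ↦ hx.1) ?_ ?_ ?_ <;> rintro x ⟨hx₀, hx₁⟩
  · exact sub_pos.2 (Real.rpow_lt_one (by linarith) (by linarith) (by linarith))
  · simpa using (((hasDerivAt_id x).const_sub 1).rpow_const (p := p) (.inr hp)).const_sub 1
  · have chord := one_sub_rpow_le_mul_rpow_sub_one hp (u := 1 - x) (by linarith) (by linarith)
    have hnonneg : 0 ≤ x * (1 - x) ^ (p - 1) :=
      mul_nonneg hx₀.le (Real.rpow_nonneg (by linarith) _)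
    rw [sub_sub_cancel] at chord
    calc p * (1 - (1 - x) ^ p) ≤ p * (2 ^ p * (x * (1 - x) ^ (p - 1))) := by
          gcongr
          linarith
      _ = 2 ^ p * (x * (p * (1 - x) ^ (p - 1))) := by ring

lemma one_sub_one_sub_rpow_rpow_le {p x : ℝ} (hp : 1 ≤ p) (hx₀ : 0 ≤ x) (hx₁ : x ≤ 1 / 2) :
    (1 - (1 - x) ^ p) ^ (2 ^ p : ℝ) ≤ (2 * x) ^ p / 2 := by
  have hp₀ : 0 < p := by linarith
  rcases hx₀.eq_or_lt with rfl | hx_pos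
  · simp [hp₀.ne', Real.zero_rpow (Real.rpow_pos_of_pos two_pos p).ne']
  have hcancel : (2 : ℝ) ^ p * (1 / 2) ^ p = 1 := by
    rw [← Real.mul_rpow (by norm_num) (by norm_num)]
    norm_num
  have hhalf : (1 - (1 / 2 : ℝ) ^ p) ^ (2 ^ p : ℝ) ≤ 1 / 2 := by
    have := one_sub_rpow_le_one_sub_mul_div_two (t := (1 / 2 : ℝ) ^ p)
      (Real.one_le_rpow one_le_two hp₀.le) (by positivity) hcancel.le
    linarith
  have hmono := monotoneOn_one_sub_one_sub_rpow_rpow_div_rpow hp ⟨hx_pos, hx₁⟩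
    (right_mem_Ioc.2 one_half_pos) hx₁
  simp only [sub_half] at hmono
  rw [div_le_iff₀ (by positivity)] at hmono
  calc (1 - (1 - x) ^ p) ^ (2 ^ p : ℝ)
      ≤ (1 - (1 / 2 : ℝ) ^ p) ^ (2 ^ p : ℝ) / (1 / 2) ^ p * x ^ p := hmono
    _ ≤ 1 / 2 / (1 / 2) ^ p * x ^ p := by gcongr
    _ = (2 * x) ^ p / 2 := by
      rw [Real.mul_rpow zero_le_two hx₀, eq_inv_of_mul_eq_one_left hcancel]
      ring

lemma one_sub_rpow_rpow_add_le_one_of_exponent_le_one {p x : ℝ} (hp₀ : 0 ≤ p) (hp₁ : p ≤ 1)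
    (hx₀ : 0 ≤ x) (hx₁ : x ≤ 1) :
    (1 - x ^ p) ^ (2 ^ p : ℝ) + (1 - (1 - x) ^ p) ^ (2 ^ p : ℝ) ≤ 1 := by
  have term_le : ∀ y : ℝ, 0 ≤ y → y ≤ 1 → (1 - y ^ p) ^ (2 ^ p : ℝ) ≤ 1 - y := fun y hy₀ hy₁ ↦
    calc (1 - y ^ p) ^ (2 ^ p : ℝ) ≤ 1 - y ^ p :=
          Real.rpow_le_self_of_le_one (sub_nonneg.2 (Real.rpow_le_one hy₀ hy₁ hp₀))
            (sub_le_self _ (Real.rpow_nonneg hy₀ p)) (Real.one_le_rpow one_le_two hp₀)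
      _ ≤ 1 - y := sub_le_sub_left (Real.self_le_rpow_of_le_one hy₀ hy₁ hp₁) 1
  linarith [term_le x hx₀ hx₁, term_le (1 - x) (by linarith) (by linarith)]

lemma one_sub_rpow_rpow_add_le_one_of_le_half {p x : ℝ} (hp : 1 ≤ p) (hx₀ : 0 ≤ x)
    (hx₁ : x ≤ 1 / 2) :
    (1 - x ^ p) ^ (2 ^ p : ℝ) + (1 - (1 - x) ^ p) ^ (2 ^ p : ℝ) ≤ 1 := by
  have hp₀ : 0 < p := by linarith
  have hmul : (2 : ℝ) ^ p * x ^ p = (2 * x) ^ p := (Real.mul_rpow zero_le_two hx₀).symm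
  have hmul_le : (2 : ℝ) ^ p * x ^ p ≤ 1 :=
    hmul.trans_le (Real.rpow_le_one (by linarith) (by linarith) hp₀.le)
  have hfirst := one_sub_rpow_le_one_sub_mul_div_two (Real.one_le_rpow one_le_two hp₀.le)
    (Real.rpow_nonneg hx₀ p) hmul_le
  have hsecond := one_sub_one_sub_rpow_rpow_le hp hx₀ hx₁
  linarith

end WuSiegel

theorem stmt_2_general (M : ℝ) (hM : 0 ≤ M) :
    ∀ x ∈ Set.Icc (0 : ℝ) 1,
      1 - (1 - x ^ M) ^ ((2 : ℝ) ^ M) ≥ (1 - (1 - x) ^ M) ^ ((2 : ℝ) ^ M) := by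
  rintro x ⟨hx₀, hx₁⟩
  rw [ge_iff_le, le_sub_iff_add_le']
  rcases le_total M 1 with hM₁ | hM₁
  · exact WuSiegel.one_sub_rpow_rpow_add_le_one_of_exponent_le_one hM hM₁ hx₀ hx₁
  rcases le_total x (1 / 2) with hx | hx
  · exact WuSiegel.one_sub_rpow_rpow_add_le_one_of_le_half hM₁ hx₀ hx
  · have := WuSiegel.one_sub_rpow_rpow_add_le_one_of_le_half hM₁ (sub_nonneg.2 hx₁) (by linarith)
    rwa [sub_sub_cancel, add_comm] at this

/-- Wu–Siegel conjecture: for every positive integer `m`, with `M := 2^m`,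
`1 - (1 - x^M)^(2^M) ≥ (1 - (1 - x)^M)^(2^M)` for all `x ∈ [0,1]`. -/
theorem stmt_2 (m : ℕ) (hm : 0 < m) (M : ℝ) (hM : M = (2 : ℝ) ^ (m : ℝ)) :
    ∀ x ∈ Set.Icc (0 : ℝ) 1,
      1 - (1 - x ^ M) ^ ((2 : ℝ) ^ M) ≥ (1 - (1 - x) ^ M) ^ ((2 : ℝ) ^ M) :=
  stmt_2_general M (hM ▸ by positivity)
end

section
/- For all positive real numbers p and q and all x ∈ [0,1], one has (1 - (1 - x)^(2^p))^(2^q) ≥ 1 - (1 - x^(2^q))^(2^p). -/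
/-!
Put `a = 2 ^ p`, `b = 2 ^ q` and `f x = 1 - (1 - x) ^ a`; the claim is `f (x ^ b) ≤ (f x) ^ b`. In
logarithmic coordinates `f` becomes `L s = log (f (exp s))` on `s ≤ 0`, and the claim becomes
`L (b * s) ≤ b * L s`. Since `L 0 = 0`, this holds for `b ≥ 1` when `L` is concave, and for `b ≤ 1`
when `L` is convex. Writing `y = 1 - exp s`, one finds `L' s = a / (1 - m)`, where `m` is the slope
of `t ↦ t ^ (1 - a)` between `y` and `1`. This power function is convex for `a ≥ 1` and concave
for `a ≤ 1`, so that `m`, hence `L'`, decreases, respectively increases, with `s`.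
-/

open Set Real

lemma convexOn_rpow_of_nonpos_s3 {r : ℝ} (hr : r ≤ 0) :
    ConvexOn ℝ (Ioi 0) fun x : ℝ ↦ x ^ r := by
  have hlog : ConvexOn ℝ (Ioi 0) fun x ↦ -r * -log x :=
    strictConcaveOn_log_Ioi.concaveOn.neg.smul (neg_nonneg.2 hr)
  refine ⟨convex_Ioi 0, fun x hx y hy c d hc hd hcd ↦ ?_⟩
  have hxy := convex_Ioi (0 : ℝ) hx hy hc hd hcd
  have hle := hlog.2 hx hy hc hd hcd
  simp only [neg_mul_neg, mul_comm r] at hle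
  simp only [rpow_def_of_pos hx, rpow_def_of_pos hy, rpow_def_of_pos hxy]
  exact (exp_le_exp.2 hle).trans (convexOn_exp.2 (mem_univ _) (mem_univ _) hc hd hcd)

lemma one_sub_slope_rpow_one_sub {a y : ℝ} (hy₀ : 0 < y) (hy₁ : y ≠ 1) :
    1 - slope (fun t : ℝ ↦ t ^ (1 - a)) 1 y = (1 - y ^ a) / ((1 - y) * y ^ (a - 1)) := by
  have hne : y - 1 ≠ 0 := sub_ne_zero.2 hy₁
  have hne' : 1 - y ≠ 0 := sub_ne_zero.2 hy₁.symm
  have hpow : y ^ a ≠ 0 := (rpow_pos_of_pos hy₀ a).ne'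
  rw [slope_def_field, one_rpow, rpow_sub hy₀, rpow_sub hy₀, rpow_one]
  field_simp
  ring

lemma one_sub_slope_rpow_one_sub_pos {a y : ℝ} (ha : 0 < a) (hy₀ : 0 < y) (hy₁ : y < 1) :
    0 < 1 - slope (fun t : ℝ ↦ t ^ (1 - a)) 1 y := by
  rw [one_sub_slope_rpow_one_sub hy₀ hy₁.ne]
  exact div_pos (sub_pos.2 (rpow_lt_one hy₀.le hy₁ ha))
    (mul_pos (sub_pos.2 hy₁) (rpow_pos_of_pos hy₀ _))

lemma one_sub_one_sub_rpow_pos_s3 {a x : ℝ} (ha : 0 < a) (hx₀ : 0 < x) (hx₁ : x ≤ 1) :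
    0 < 1 - (1 - x) ^ a :=
  sub_pos.2 (rpow_lt_one (sub_nonneg.2 hx₁) (sub_lt_self 1 hx₀) ha)

lemma one_sub_exp_mem_Ioo {s : ℝ} (hs : s < 0) : 1 - exp s ∈ Ioo 0 1 :=
  ⟨sub_pos.2 (exp_lt_one_iff.2 hs), sub_lt_self 1 (exp_pos s)⟩

/-- The map `x ↦ 1 - (1 - x) ^ a` of `(0, 1]` in logarithmic coordinates `x = exp s`, `s ≤ 0`:
comparing the map with powers of `x` becomes a convexity question. -/
noncomputable def logOneSubRpow (a s : ℝ) : ℝ :=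
  log (1 - (1 - exp s) ^ a)

namespace logOneSubRpow

variable {a b s : ℝ}

lemma apply_zero (ha : a ≠ 0) : logOneSubRpow a 0 = 0 := by
  simp [logOneSubRpow, ha]

lemma continuousOn (ha : 0 < a) : ContinuousOn (logOneSubRpow a) (Iic 0) := by
  have harg : Continuous fun s ↦ 1 - (1 - exp s) ^ a :=
    continuous_const.sub ((continuous_rpow_const ha.le).comp (continuous_const.sub continuous_exp))
  exact harg.continuousOn.log fun s hs ↦
    (one_sub_one_sub_rpow_pos_s3 ha (exp_pos s) (exp_le_one_iff.2 hs)).ne'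

lemma hasDerivAt (ha : 0 < a) (hs : s < 0) :
    HasDerivAt (logOneSubRpow a)
      (a / (1 - slope (fun t : ℝ ↦ t ^ (1 - a)) 1 (1 - exp s))) s := by
  have hy := one_sub_exp_mem_Ioo hs
  have hderiv := ((((Real.hasDerivAt_exp s).const_sub 1).rpow_const (p := a)
    (Or.inl hy.1.ne')).const_sub 1).log
      (one_sub_one_sub_rpow_pos_s3 ha (exp_pos s) (exp_le_one_iff.2 hs.le)).ne'
  refine hderiv.congr_deriv ?_
  rw [one_sub_slope_rpow_one_sub hy.1 hy.2.ne, sub_sub_cancel, div_div_eq_mul_div]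
  ring

lemma differentiableOn (ha : 0 < a) : DifferentiableOn ℝ (logOneSubRpow a) (Iio 0) :=
  fun _ hs ↦ (hasDerivAt ha hs).differentiableAt.differentiableWithinAt

lemma antitoneOn_deriv (ha : 1 ≤ a) : AntitoneOn (deriv (logOneSubRpow a)) (Iio 0) := by
  have ha₀ : 0 < a := zero_lt_one.trans_le ha
  intro s hs t ht hst
  have hy := one_sub_exp_mem_Ioo hs
  have hz := one_sub_exp_mem_Ioo ht
  rw [(hasDerivAt ha₀ hs).deriv, (hasDerivAt ha₀ ht).deriv]
  refine div_le_div_of_nonneg_left ha₀.le (one_sub_slope_rpow_one_sub_pos ha₀ hy.1 hy.2)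
    (sub_le_sub_left ?_ 1)
  exact (convexOn_rpow_of_nonpos_s3 (sub_nonpos.2 ha)).slope_mono (mem_Ioi.2 one_pos)
    ⟨hz.1, hz.2.ne⟩ ⟨hy.1, hy.2.ne⟩ (sub_le_sub_left (exp_le_exp.2 hst) 1)

lemma monotoneOn_deriv (ha₀ : 0 < a) (ha : a ≤ 1) :
    MonotoneOn (deriv (logOneSubRpow a)) (Iio 0) := by
  intro s hs t ht hst
  have hy := one_sub_exp_mem_Ioo hs
  have hz := one_sub_exp_mem_Ioo ht
  rw [(hasDerivAt ha₀ hs).deriv, (hasDerivAt ha₀ ht).deriv]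
  refine div_le_div_of_nonneg_left ha₀.le (one_sub_slope_rpow_one_sub_pos ha₀ hz.1 hz.2)
    (sub_le_sub_left ?_ 1)
  exact (concaveOn_rpow (sub_nonneg.2 ha) (sub_le_self 1 ha₀.le)).slope_anti
    (mem_Ici.2 zero_le_one) ⟨hz.1.le, hz.2.ne⟩ ⟨hy.1.le, hy.2.ne⟩
    (sub_le_sub_left (exp_le_exp.2 hst) 1)

lemma concaveOn (ha : 1 ≤ a) : ConcaveOn ℝ (Iic 0) (logOneSubRpow a) := by
  have ha₀ : 0 < a := zero_lt_one.trans_le ha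
  refine AntitoneOn.concaveOn_of_deriv (convex_Iic 0) (continuousOn ha₀) ?_ ?_ <;>
    rw [interior_Iic]
  exacts [differentiableOn ha₀, antitoneOn_deriv ha]

lemma convexOn (ha₀ : 0 < a) (ha : a ≤ 1) : ConvexOn ℝ (Iic 0) (logOneSubRpow a) := by
  refine MonotoneOn.convexOn_of_deriv (convex_Iic 0) (continuousOn ha₀) ?_ ?_ <;>
    rw [interior_Iic]
  exacts [differentiableOn ha₀, monotoneOn_deriv ha₀ ha]

lemma mul_le_of_one_le (ha : 1 ≤ a) (hb : 1 ≤ b) (hs : s ≤ 0) :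
    logOneSubRpow a (b * s) ≤ b * logOneSubRpow a s := by
  have hb₀ : 0 < b := zero_lt_one.trans_le hb
  have h := (concaveOn ha).2 (mem_Iic.2 (mul_nonpos_of_nonneg_of_nonpos hb₀.le hs)) self_mem_Iic
    (inv_nonneg.2 hb₀.le) (sub_nonneg.2 (inv_le_one_of_one_le₀ hb)) (add_sub_cancel _ _)
  simp only [smul_eq_mul, apply_zero (zero_lt_one.trans_le ha).ne', mul_zero, add_zero,
    inv_mul_cancel_left₀ hb₀.ne'] at h
  rwa [inv_mul_le_iff₀ hb₀] at h

lemma mul_le_of_le_one (ha₀ : 0 < a) (ha : a ≤ 1) (hb₀ : 0 ≤ b) (hb : b ≤ 1) (hs : s ≤ 0) :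
    logOneSubRpow a (b * s) ≤ b * logOneSubRpow a s := by
  have h := (convexOn ha₀ ha).2 (mem_Iic.2 hs) self_mem_Iic hb₀ (sub_nonneg.2 hb)
    (add_sub_cancel _ _)
  simpa only [smul_eq_mul, apply_zero ha₀.ne', mul_zero, add_zero] using h

lemma mul_le (ha : 0 < a) (hb : 0 < b) (hab : 0 ≤ (a - 1) * (b - 1)) (hs : s ≤ 0) :
    logOneSubRpow a (b * s) ≤ b * logOneSubRpow a s := by
  rcases mul_nonneg_iff.1 hab with ⟨ha₁, hb₁⟩ | ⟨ha₁, hb₁⟩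
  · exact mul_le_of_one_le (sub_nonneg.1 ha₁) (sub_nonneg.1 hb₁) hs
  · exact mul_le_of_le_one ha (sub_nonpos.1 ha₁) hb.le (sub_nonpos.1 hb₁) hs

lemma exp_apply_log {x : ℝ} (ha : 0 < a) (hx₀ : 0 < x) (hx₁ : x ≤ 1) :
    exp (logOneSubRpow a (log x)) = 1 - (1 - x) ^ a := by
  rw [logOneSubRpow, exp_log hx₀, exp_log (one_sub_one_sub_rpow_pos_s3 ha hx₀ hx₁)]

end logOneSubRpow

lemma one_sub_one_sub_rpow_rpow_le {a b x : ℝ} (ha : 0 < a) (hb : 0 < b)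
    (hab : 0 ≤ (a - 1) * (b - 1)) (hx : x ∈ Icc 0 1) :
    1 - (1 - x ^ b) ^ a ≤ (1 - (1 - x) ^ a) ^ b := by
  obtain rfl | hx₀ := hx.1.eq_or_lt
  · simp [hb.ne']
  calc 1 - (1 - x ^ b) ^ a = exp (logOneSubRpow a (b * log x)) := by
        rw [← log_rpow hx₀, logOneSubRpow.exp_apply_log ha (rpow_pos_of_pos hx₀ b)
          (rpow_le_one hx.1 hx.2 hb.le)]
    _ ≤ exp (b * logOneSubRpow a (log x)) :=
        exp_le_exp.2 (logOneSubRpow.mul_le ha hb hab (log_nonpos hx.1 hx.2))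
    _ = (1 - (1 - x) ^ a) ^ b := by
        rw [mul_comm, exp_mul, logOneSubRpow.exp_apply_log ha hx₀ hx.2]

theorem stmt_3_general (p q : ℝ) (hpq : 0 ≤ p * q) :
    ∀ x ∈ Set.Icc (0 : ℝ) 1,
      (1 - (1 - x) ^ ((2 : ℝ) ^ p)) ^ ((2 : ℝ) ^ q)
        ≥ 1 - (1 - x ^ ((2 : ℝ) ^ q)) ^ ((2 : ℝ) ^ p) := by
  intro x hx
  have hab : 0 ≤ ((2 : ℝ) ^ p - 1) * ((2 : ℝ) ^ q - 1) := by
    rcases mul_nonneg_iff.1 hpq with ⟨hp, hq⟩ | ⟨hp, hq⟩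
    · exact mul_nonneg (sub_nonneg.2 (one_le_rpow one_le_two hp))
        (sub_nonneg.2 (one_le_rpow one_le_two hq))
    · exact mul_nonneg_of_nonpos_of_nonpos
        (sub_nonpos.2 (rpow_le_one_of_one_le_of_nonpos one_le_two hp))
        (sub_nonpos.2 (rpow_le_one_of_one_le_of_nonpos one_le_two hq))
  exact one_sub_one_sub_rpow_rpow_le (rpow_pos_of_pos two_pos p) (rpow_pos_of_pos two_pos q) hab hx

/-- Continuous version of `10 ≽ 01`: for positive reals `p, q` and `x ∈ [0,1]`,
`(1 - (1 - x)^(2^p))^(2^q) ≥ 1 - (1 - x^(2^q))^(2^p)`. -/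
theorem stmt_3 (p q : ℝ) (hp : 0 < p) (hq : 0 < q) :
    ∀ x ∈ Set.Icc (0 : ℝ) 1,
      (1 - (1 - x) ^ ((2 : ℝ) ^ p)) ^ ((2 : ℝ) ^ q)
        ≥ 1 - (1 - x ^ ((2 : ℝ) ^ q)) ^ ((2 : ℝ) ^ p) :=
  stmt_3_general p q (mul_pos hp hq).le
end

section
/- The functions g(y) = y/ln(1-y) and h(y) = (1-y)/ln(y) are strictly convex on the open interval (0,1). -/
/-!
For `0 < y ≠ 1` the number `-h(y) = (y - 1) / log y`, the logarithmic mean of `1` and `y`, equals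
`∫ t in 0..1, y ^ t`. Each power `y ↦ y ^ t` with `0 < t < 1` is strictly concave, hence so is
their integral, and `h` is strictly convex. Finally `g(y) = h(1 - y)`.
-/

open MeasureTheory Set

theorem strictConvexOn_comp_affineMap {𝕜 E F β : Type*} [Ring 𝕜] [PartialOrder 𝕜]
    [AddCommGroup E] [Module 𝕜 E] [AddCommGroup F] [Module 𝕜 F]
    [AddCommMonoid β] [PartialOrder β] [SMul 𝕜 β] {f : F → β} {s : Set F}
    (hf : StrictConvexOn 𝕜 s f) (φ : E →ᵃ[𝕜] F) (hφ : Function.Injective φ) :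
    StrictConvexOn 𝕜 (φ ⁻¹' s) (f ∘ φ) := by
  refine ⟨hf.1.affine_preimage φ, fun x hx y hy hxy a b ha hb hab => ?_⟩
  simpa only [Function.comp_apply, Convex.combo_affine_apply hab] using
    hf.2 hx hy (hφ.ne hxy) ha hb hab

theorem strictConcaveOn_integral {α E : Type*} [MeasurableSpace α] {μ : Measure α} [NeZero μ]
    [AddCommGroup E] [Module ℝ E] {s : Set E} {f : α → E → ℝ}
    (hf : ∀ᵐ t ∂μ, StrictConcaveOn ℝ s (f t)) (hint : ∀ x ∈ s, Integrable (fun t => f t x) μ) :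
    StrictConcaveOn ℝ s (fun x => ∫ t, f t x ∂μ) := by
  obtain ⟨_, hs, _⟩ := hf.exists
  refine ⟨hs, fun x hx y hy hxy a b ha hb hab => ?_⟩
  have hlt : ∀ᵐ t ∂μ, a * f t x + b * f t y < f t (a • x + b • y) :=
    hf.mono fun t ht => ht.2 hx hy hxy ha hb hab
  have hint_combo : Integrable (fun t => a * f t x + b * f t y) μ :=
    ((hint x hx).const_mul a).add ((hint y hy).const_mul b)
  have hint_mid := hint _ (hs hx hy ha.le hb.le hab)
  calc a • ∫ t, f t x ∂μ + b • ∫ t, f t y ∂μ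
      = ∫ t, a * f t x + b * f t y ∂μ := by
        rw [integral_add ((hint x hx).const_mul a) ((hint y hy).const_mul b),
          integral_const_mul, integral_const_mul, smul_eq_mul, smul_eq_mul]
    _ < ∫ t, f t (a • x + b • y) ∂μ := by
        have hle := hlt.mono fun _ => le_of_lt
        refine (integral_mono_ae hint_combo hint_mid hle).lt_of_ne fun heq => ?_
        obtain ⟨t, ht_lt, ht_eq⟩ :=
          (hlt.and ((integral_eq_iff_of_ae_le hint_combo hint_mid hle).1 heq)).exists
        exact ht_lt.ne ht_eq

section ConstRpow

variable {x : ℝ}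

theorem intervalIntegrable_const_rpow (hx : 0 < x) (a b : ℝ) :
    IntervalIntegrable (fun t => x ^ t) volume a b :=
  (Real.continuous_const_rpow hx.ne').intervalIntegrable a b

theorem integral_const_rpow (hx : 0 < x) (hx1 : x ≠ 1) (a b : ℝ) :
    ∫ t in a..b, x ^ t = (x ^ b - x ^ a) / Real.log x := by
  have hlog : Real.log x ≠ 0 := Real.log_ne_zero_of_pos_of_ne_one hx hx1
  have hderiv (t : ℝ) : HasDerivAt (fun t => x ^ t / Real.log x) (x ^ t) t := by
    simpa [hlog] using ((hasDerivAt_id t).const_rpow hx).div_const (Real.log x)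
  rw [intervalIntegral.integral_eq_sub_of_hasDerivAt (fun t _ => hderiv t)
    (intervalIntegrable_const_rpow hx a b), sub_div]

theorem strictConcaveOn_integral_const_rpow {a b : ℝ} (ha : 0 ≤ a) (hab : a < b) (hb : b ≤ 1) :
    StrictConcaveOn ℝ (Ioi 0) (fun x : ℝ => ∫ t in a..b, x ^ t) := by
  simp only [intervalIntegral.integral_of_le hab.le, integral_Ioc_eq_integral_Ioo]
  have : NeZero (volume.restrict (Ioo a b)) := ⟨by simpa using hab⟩
  refine strictConcaveOn_integral ?_ fun x hx => ?_
  · filter_upwards [ae_restrict_mem measurableSet_Ioo] with t ht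
    exact (Real.strictConcaveOn_rpow (ha.trans_lt ht.1) (ht.2.trans_le hb)).subset
      Ioi_subset_Ici_self (convex_Ioi 0)
  · exact (intervalIntegrable_iff_integrableOn_Ioo_of_le hab.le).1
      (intervalIntegrable_const_rpow hx a b)

end ConstRpow

theorem strictConvexOn_one_sub_div_log {s : Set ℝ} (hs : Convex ℝ s) (hpos : s ⊆ Ioi 0)
    (hone : 1 ∉ s) : StrictConvexOn ℝ s (fun y => (1 - y) / Real.log y) := by
  have hconcave := (strictConcaveOn_integral_const_rpow le_rfl one_pos le_rfl).subset hpos hs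
  refine hconcave.neg.congr fun y hy => ?_
  rw [Pi.neg_apply, integral_const_rpow (hpos hy) (ne_of_mem_of_not_mem hy hone),
    Real.rpow_one, Real.rpow_zero, ← neg_div, neg_sub]

theorem stmt_4_general {s : Set ℝ} (hs : Convex ℝ s) (hpos : s ⊆ Ioi 0) (hone : 1 ∉ s) :
    StrictConvexOn ℝ ((fun y => 1 - y) ⁻¹' s) (fun y => y / Real.log (1 - y)) ∧
    StrictConvexOn ℝ s (fun y => (1 - y) / Real.log y) := by
  have hh := strictConvexOn_one_sub_div_log hs hpos hone
  let reflection : ℝ ≃ᵃ[ℝ] ℝ := AffineEquiv.constVSub ℝ 1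
  have hg := strictConvexOn_comp_affineMap hh reflection.toAffineMap reflection.injective
  refine ⟨hg.congr fun y _ => ?_, hh⟩
  simp [reflection]

/-- `g(y) = y/ln(1-y)` and `h(y) = (1-y)/ln(y)` are strictly convex on `(0,1)`. -/
theorem stmt_4 :
    StrictConvexOn ℝ (Set.Ioo (0 : ℝ) 1) (fun y => y / Real.log (1 - y)) ∧
    StrictConvexOn ℝ (Set.Ioo (0 : ℝ) 1) (fun y => (1 - y) / Real.log y) := by
  simpa using stmt_4_general (convex_Ioo 0 1) Ioo_subset_Ioi_self (by simp)
end

section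
/- For every y ∈ (0,1), the Wronskian g(y)·h'(y) − g'(y)·h(y) is nonzero, where g' and h' denote the derivatives of g and h. -/
noncomputable def gFun (y : ℝ) : ℝ := y / Real.log (1 - y)

noncomputable def hFun (y : ℝ) : ℝ := (1 - y) / Real.log y

/-!
Both `g` and `h` are negative, and `h' < 0` by the strict inequality `1 - 1/y < log y`,
valid for positive `y ≠ 1`. The reflection `g(y) = h(1 - y)` turns this into `g' > 0`. Hence
`g h' > 0 > g' h`.
-/

lemma one_sub_inv_lt_log {y : ℝ} (hy : 0 < y) (hy1 : y ≠ 1) : 1 - y⁻¹ < Real.log y := by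
  have hlog_inv : Real.log y⁻¹ < y⁻¹ - 1 :=
    Real.log_lt_sub_one_of_pos (inv_pos.2 hy) (inv_ne_one.2 hy1)
  rw [Real.log_inv] at hlog_inv
  linarith

lemma hFun_neg {y : ℝ} (hy : 0 < y) (hy1 : y ≠ 1) : hFun y < 0 := by
  rcases hy1.lt_or_gt with hlt | hgt
  · exact div_neg_of_pos_of_neg (sub_pos.2 hlt) (Real.log_neg hy hlt)
  · exact div_neg_of_neg_of_pos (sub_neg.2 hgt) (Real.log_pos hgt)

lemma hasDerivAt_hFun {y : ℝ} (hlog : Real.log y ≠ 0) :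
    HasDerivAt hFun ((1 - y⁻¹ - Real.log y) / Real.log y ^ 2) y := by
  have hy : y ≠ 0 := (Real.log_ne_zero.1 hlog).1
  have hnumerator : 1 - y⁻¹ - Real.log y = -1 * Real.log y - (1 - y) * y⁻¹ := by
    field_simp
    ring
  rw [hnumerator]
  exact ((hasDerivAt_id y).const_sub 1).div (Real.hasDerivAt_log hy) hlog

lemma deriv_hFun_neg {y : ℝ} (hy : 0 < y) (hy1 : y ≠ 1) : deriv hFun y < 0 := by
  have hlog : Real.log y ≠ 0 := Real.log_ne_zero_of_pos_of_ne_one hy hy1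
  rw [(hasDerivAt_hFun hlog).deriv]
  exact div_neg_of_neg_of_pos (sub_neg.2 (one_sub_inv_lt_log hy hy1)) (sq_pos_of_ne_zero hlog)

lemma gFun_eq_hFun_one_sub (y : ℝ) : gFun y = hFun (1 - y) := by
  rw [gFun, hFun, sub_sub_cancel]

lemma gFun_neg {y : ℝ} (hy : y < 1) (hy0 : y ≠ 0) : gFun y < 0 := by
  rw [gFun_eq_hFun_one_sub]
  exact hFun_neg (sub_pos.2 hy) (sub_eq_self.not.2 hy0)

lemma deriv_gFun_pos {y : ℝ} (hy : y < 1) (hy0 : y ≠ 0) : 0 < deriv gFun y := by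
  rw [funext gFun_eq_hFun_one_sub, deriv_comp_const_sub]
  exact neg_pos.2 (deriv_hFun_neg (sub_pos.2 hy) (sub_eq_self.not.2 hy0))

/-- For every `y ∈ (0,1)`, the Wronskian `g(y)·h'(y) − g'(y)·h(y)` is nonzero. -/
theorem stmt_7 (y : ℝ) (hy : y ∈ Set.Ioo (0 : ℝ) 1) :
    gFun y * deriv hFun y - deriv gFun y * hFun y ≠ 0 := by
  obtain ⟨hy0, hy1⟩ := hy
  have hgh' : 0 < gFun y * deriv hFun y :=
    mul_pos_of_neg_of_neg (gFun_neg hy1 hy0.ne') (deriv_hFun_neg hy0 hy1.ne)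
  have hg'h : deriv gFun y * hFun y < 0 :=
    mul_neg_of_pos_of_neg (deriv_gFun_pos hy1 hy0.ne') (hFun_neg hy0 hy1.ne)
  exact (sub_pos.2 (hg'h.trans hgh')).ne'
end

section
/- There exists a tuple of functions (Y, Z, P, Q, J, K) from ℝ to ℝ such that Y, Z, P, Q are differentiable on ℝ, Y(t) ∈ (0,1) and Z(t) ∈ (0,1) for all t, Y(0) = Z(0) = 1/2, P(0) = Q(0) = 1, J(0) = K(0) = ln 2, and for every t ∈ ℝ: Y'(t) = ln(2)·P(t)·Y(t)·ln(Y(t)); Z'(t) = −ln(2)·Q(t)·Z(t)·ln(Z(t)); P'(t) = −ln(2)·(1 − J(t))·P(t)·Q(t); Q'(t) = ln(2)·(1 − K(t))·P(t)·Q(t); −1 = (Y(t)/ln(Z(t)))·J(t) + (Z(t)/ln(Y(t)))·K(t); and 0 = ((Z(t)·ln(Z(t)) + Y(t))/(Z(t)·ln(Z(t))²))·J(t) − ((Y(t)·ln(Y(t)) + Z(t))/(Y(t)·ln(Y(t))²))·K(t). Moreover, this tuple is unique: any two tuples of functions satisfying all of these conditions are equal. -/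
/-- Solution of the initial value problem (IVP 1 in the paper): four ODEs
coupled with two algebraic constraints. -/
def IVPSol (Y Z P Q J K : ℝ → ℝ) : Prop :=
  Differentiable ℝ Y ∧ Differentiable ℝ Z ∧ Differentiable ℝ P ∧ Differentiable ℝ Q ∧
  (∀ t, Y t ∈ Set.Ioo (0 : ℝ) 1) ∧ (∀ t, Z t ∈ Set.Ioo (0 : ℝ) 1) ∧
  Y 0 = 1 / 2 ∧ Z 0 = 1 / 2 ∧ P 0 = 1 ∧ Q 0 = 1 ∧
  J 0 = Real.log 2 ∧ K 0 = Real.log 2 ∧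
  (∀ t, deriv Y t = Real.log 2 * P t * Y t * Real.log (Y t)) ∧
  (∀ t, deriv Z t = -(Real.log 2) * Q t * Z t * Real.log (Z t)) ∧
  (∀ t, deriv P t = -(Real.log 2) * (1 - J t) * P t * Q t) ∧
  (∀ t, deriv Q t = Real.log 2 * (1 - K t) * P t * Q t) ∧
  (∀ t, -1 = Y t / Real.log (Z t) * J t + Z t / Real.log (Y t) * K t) ∧
  (∀ t, 0 = (Z t * Real.log (Z t) + Y t) / (Z t * (Real.log (Z t)) ^ 2) * J t
          - (Y t * Real.log (Y t) + Z t) / (Y t * (Real.log (Y t)) ^ 2) * K t)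

/-!
Write `η s = -s log s`. Along a solution, the first constraint makes `Y + Z - 1` and
`P η(Y) - Q η(Z)` satisfy a homogeneous linear system of differential equations. Both vanish at
time `0`, so `Y = 1 - Z` and `P η(1 - Z) = Q η(Z)` throughout. On the line `Y + Z = 1` the
constraints are a nonsingular linear system for `(J, K)`, because `log s * log (1 - s)` is smaller
than the binary entropy `η(s) + η(1 - s)`; hence `J` and `K`, and then `log P` and `log Q`, are
functions of `Z`, and everything reduces to a scalar autonomous equation `Z' = speed Z`.

The speed is positive on `(0, 1)` and symmetric about `1 / 2`, and near `0` it is at most a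
multiple of `η(Z)`. So the time needed to reach `s` from `1 / 2` diverges like `-log (-log s)` as
`s` tends to `0`, and symmetrically at `1`: it is a bijection from `(0, 1)` onto `ℝ`, whose inverse
is the unique global solution.
-/

open Real Set Filter Topology

section LinearODE

variable {E : Type*} [NormedAddCommGroup E] [NormedSpace ℝ E]

lemma eq_zero_of_hasDerivAt_clm_apply {A : ℝ → E →L[ℝ] E} {f : ℝ → E} {t₀ : ℝ}
    (hA : Continuous A) (hf : ∀ t, HasDerivAt f (A t (f t)) t) (h₀ : f t₀ = 0) (t : ℝ) :
    f t = 0 := by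
  set a := min t t₀ - 1
  set b := max t t₀ + 1
  have ha : a < min t t₀ := sub_one_lt _
  have hb : max t t₀ < b := lt_add_one _
  have ht₀ : t₀ ∈ Ioo a b := ⟨ha.trans_le (min_le_right _ _), (le_max_right _ _).trans_lt hb⟩
  have ht : t ∈ Ioo a b := ⟨ha.trans_le (min_le_left _ _), (le_max_left _ _).trans_lt hb⟩
  obtain ⟨K, hK⟩ := isCompact_Icc.exists_bound_of_continuousOn (hA.continuousOn (s := Icc a b))
  have hLip : ∀ s ∈ Ioo a b, LipschitzOnWith K.toNNReal (A s) univ := fun s hs ↦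
    ((A s).lipschitz.weaken (NNReal.coe_le_coe.1
      ((hK s (Ioo_subset_Icc_self hs)).trans (le_coe_toNNReal K)))).lipschitzOnWith
  exact ODE_solution_unique_of_mem_Ioo hLip ht₀ (fun s _ ↦ ⟨hf s, mem_univ _⟩)
    (g := fun _ ↦ 0) (fun s _ ↦ ⟨by simpa using hasDerivAt_const s (0 : E), mem_univ _⟩) h₀ ht

lemma eq_zero_of_hasDerivAt_planar_linear {u v a b : ℝ → ℝ} {c t₀ : ℝ}
    (ha : Continuous a) (hb : Continuous b) (hu : ∀ t, HasDerivAt u (c * v t) t)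
    (hv : ∀ t, HasDerivAt v (a t * v t + b t * u t) t) (hu₀ : u t₀ = 0) (hv₀ : v t₀ = 0) (t : ℝ) :
    u t = 0 ∧ v t = 0 := by
  let fst := ContinuousLinearMap.fst ℝ ℝ ℝ
  let snd := ContinuousLinearMap.snd ℝ ℝ ℝ
  let A (t : ℝ) : ℝ × ℝ →L[ℝ] ℝ × ℝ :=
    (ContinuousLinearMap.inl ℝ ℝ ℝ).comp (c • snd) +
      (ContinuousLinearMap.inr ℝ ℝ ℝ).comp (a t • snd + b t • fst)
  have hA : Continuous A := by fun_prop
  have huv (t : ℝ) : HasDerivAt (fun t ↦ (u t, v t)) (A t (u t, v t)) t := by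
    simpa [A, fst, snd] using (hu t).prodMk (hv t)
  exact Prod.mk_eq_zero.1 (eq_zero_of_hasDerivAt_clm_apply hA huv (Prod.mk_eq_zero.2 ⟨hu₀, hv₀⟩) t)

end LinearODE

lemma hasDerivAt_integral_of_continuousOn {E : Type*} [NormedAddCommGroup E] [NormedSpace ℝ E]
    [CompleteSpace E] {f : ℝ → E} {I : Set ℝ} [I.OrdConnected] {a x : ℝ} (hf : ContinuousOn f I)
    (hI : IsOpen I) (ha : a ∈ I) (hx : x ∈ I) :
    HasDerivAt (fun u ↦ ∫ t in a..u, f t) (f x) x :=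
  intervalIntegral.integral_hasDerivAt_right
    (hf.mono (OrdConnected.uIcc_subset ‹_› ha hx)).intervalIntegrable
    (hf.stronglyMeasurableAtFilter hI x hx) (hf.continuousAt (hI.mem_nhds hx))

section SeparationOfVariables

/-- A solution, defined for all times, of the scalar autonomous initial value problem `y' = g(y)`,
`y(0) = s₀` which stays in `I`. -/
structure IsGlobalSolution (g : ℝ → ℝ) (I : Set ℝ) (s₀ : ℝ) (y : ℝ → ℝ) : Prop where
  mem (t : ℝ) : y t ∈ I
  apply_zero : y 0 = s₀
  hasDerivAt (t : ℝ) : HasDerivAt y (g (y t)) t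

/-- The time which a solution of `y' = g(y)` needs to travel from `s₀` to `s`. -/
noncomputable def timeMap (g : ℝ → ℝ) (s₀ s : ℝ) : ℝ := ∫ x in s₀..s, (g x)⁻¹

variable {g y : ℝ → ℝ} {I : Set ℝ} {s₀ s : ℝ}

lemma timeMap_two_mul_sub (h : ∀ x ∈ uIcc s₀ s, g (2 * s₀ - x) = g x) :
    timeMap g s₀ (2 * s₀ - s) = -timeMap g s₀ s := by
  have hint : ∫ x in s₀..s, (g (2 * s₀ - x))⁻¹ = ∫ x in s₀..s, (g x)⁻¹ :=
    intervalIntegral.integral_congr fun x hx ↦ congrArg Inv.inv (h x hx)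
  rw [intervalIntegral.integral_comp_sub_left (fun x ↦ (g x)⁻¹), two_mul, add_sub_cancel_right,
    ← two_mul, intervalIntegral.integral_symm] at hint
  exact neg_eq_iff_eq_neg.1 hint

variable [I.OrdConnected]

lemma hasDerivAt_timeMap (hI : IsOpen I) (hg : ContinuousOn g I) (hpos : ∀ x ∈ I, 0 < g x)
    (hs₀ : s₀ ∈ I) (hs : s ∈ I) : HasDerivAt (timeMap g s₀) (g s)⁻¹ s :=
  hasDerivAt_integral_of_continuousOn (hg.inv₀ fun x hx ↦ (hpos x hx).ne') hI hs₀ hs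

lemma strictMonoOn_timeMap (hI : IsOpen I) (hg : ContinuousOn g I) (hpos : ∀ x ∈ I, 0 < g x)
    (hs₀ : s₀ ∈ I) : StrictMonoOn (timeMap g s₀) I := by
  have hderiv {x : ℝ} (hx : x ∈ I) := hasDerivAt_timeMap hI hg hpos hs₀ hx
  refine strictMonoOn_of_deriv_pos (OrdConnected.convex ‹_›)
    (fun x hx ↦ (hderiv hx).continuousAt.continuousWithinAt) fun x hx ↦ ?_
  rw [(hderiv (interior_subset hx)).deriv]
  exact inv_pos.2 (hpos x (interior_subset hx))

lemma IsGlobalSolution.timeMap_apply (hy : IsGlobalSolution g I s₀ y) (hI : IsOpen I)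
    (hg : ContinuousOn g I) (hpos : ∀ x ∈ I, 0 < g x) (t : ℝ) : timeMap g s₀ (y t) = t := by
  have hs₀ : s₀ ∈ I := hy.apply_zero ▸ hy.mem 0
  have hderiv (t : ℝ) : HasDerivAt (fun t ↦ timeMap g s₀ (y t) - t) 0 t := by
    have h := ((hasDerivAt_timeMap hI hg hpos hs₀ (hy.mem t)).comp t
      (hy.hasDerivAt t)).sub (hasDerivAt_id t)
    rwa [inv_mul_cancel₀ (hpos _ (hy.mem t)).ne', sub_self] at h
  have hconst := is_const_of_deriv_eq_zero (fun t ↦ (hderiv t).differentiableAt)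
    (fun t ↦ (hderiv t).deriv) t 0
  simpa [hy.apply_zero, timeMap, sub_eq_zero] using hconst

lemma exists_isGlobalSolution (hI : IsOpen I) (hg : ContinuousOn g I) (hpos : ∀ x ∈ I, 0 < g x)
    (hs₀ : s₀ ∈ I) (hsurj : SurjOn (timeMap g s₀) I univ) : ∃ y, IsGlobalSolution g I s₀ y := by
  have hmono := strictMonoOn_timeMap hI hg hpos hs₀
  choose y hy hTy using fun t ↦ hsurj (mem_univ t)
  have hyT {s : ℝ} (hs : s ∈ I) : y (timeMap g s₀ s) = s := hmono.injOn (hy _) hs (hTy _)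
  have hy_mono : StrictMono y := fun a b hab ↦
    (hmono.lt_iff_lt (hy a) (hy b)).1 (by rwa [hTy, hTy])
  have hy_image : y '' univ = I := by
    rw [image_univ]
    exact Subset.antisymm (range_subset_iff.2 hy) fun s hs ↦ ⟨_, hyT hs⟩
  have hy_cont (t : ℝ) : ContinuousAt y t :=
    (hy_mono.strictMonoOn univ).continuousAt_of_image_mem_nhds univ_mem
      (hy_image ▸ hI.mem_nhds (hy t))
  refine ⟨y, hy, by simpa [timeMap] using hyT hs₀, fun t ↦ ?_⟩
  simpa only [inv_inv] using
    (hasDerivAt_timeMap hI hg hpos hs₀ (hy t)).of_local_left_inverse (hy_cont t)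
      (inv_ne_zero (hpos _ (hy t)).ne') (.of_forall hTy)

theorem existsUnique_isGlobalSolution (hI : IsOpen I) (hg : ContinuousOn g I)
    (hpos : ∀ x ∈ I, 0 < g x) (hs₀ : s₀ ∈ I) (hsurj : SurjOn (timeMap g s₀) I univ) :
    ∃! y, IsGlobalSolution g I s₀ y := by
  refine existsUnique_of_exists_of_unique (exists_isGlobalSolution hI hg hpos hs₀ hsurj)
    fun y₁ y₂ h₁ h₂ ↦ funext fun t ↦ ?_
  refine (strictMonoOn_timeMap hI hg hpos hs₀).injOn (h₁.mem t) (h₂.mem t) ?_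
  rw [h₁.timeMap_apply hI hg hpos, h₂.timeMap_apply hI hg hpos]

end SeparationOfVariables

section UnitInterval

variable {s : ℝ}

lemma one_sub_mem_Ioo_s13 (hs : s ∈ Ioo (0 : ℝ) 1) : 1 - s ∈ Ioo (0 : ℝ) 1 :=
  ⟨sub_pos.2 hs.2, sub_lt_self 1 hs.1⟩

lemma one_half_mem_Ioo : (1 / 2 : ℝ) ∈ Ioo (0 : ℝ) 1 := by norm_num

lemma negMulLog_pos (hs : s ∈ Ioo (0 : ℝ) 1) : 0 < negMulLog s :=
  mul_pos_of_neg_of_neg (neg_neg_of_pos hs.1) (log_neg hs.1 hs.2)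

lemma negMulLog_lt_one_sub (hs : s ∈ Ioo (0 : ℝ) 1) : negMulLog s < 1 - s :=
  negMulLog_lt_one_sub_self hs.1.le hs.2.ne

lemma hasDerivAt_log_negMulLog (hs : s ∈ Ioo (0 : ℝ) 1) :
    HasDerivAt (fun x ↦ log (negMulLog x)) ((-log s - 1) / negMulLog s) s :=
  (hasDerivAt_negMulLog hs.1.ne').log (negMulLog_pos hs).ne'

lemma hasDerivAt_log_neg_log (hs : s ∈ Ioo (0 : ℝ) 1) :
    HasDerivAt (fun x ↦ log (-log x)) (-(negMulLog s)⁻¹) s := by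
  have hlog := log_neg hs.1 hs.2
  refine ((hasDerivAt_log hs.1.ne').neg.log (neg_pos.2 hlog).ne').congr_deriv ?_
  rw [negMulLog, neg_mul, inv_neg, mul_inv, neg_neg, Pi.neg_apply, neg_div_neg_eq, div_eq_mul_inv]

lemma tendsto_log_neg_log_nhdsGT_zero : Tendsto (fun x ↦ log (-log x)) (𝓝[>] 0) atTop :=
  tendsto_log_atTop.comp (tendsto_neg_atBot_atTop.comp tendsto_log_nhdsGT_zero)

lemma tendsto_timeMap_nhdsGT_zero_of_le_mul_negMulLog {g : ℝ → ℝ} {C s₀ : ℝ}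
    (hg : ContinuousOn g (Ioo 0 1)) (hpos : ∀ x ∈ Ioo 0 1, 0 < g x) (hs₀ : s₀ ∈ Ioo (0 : ℝ) 1)
    (hC : 0 < C) (hle : ∀ x ∈ Ioc 0 s₀, g x ≤ C * negMulLog x) :
    Tendsto (timeMap g s₀) (𝓝[>] 0) atBot := by
  have hmem {x : ℝ} (hx : x ∈ Ioc 0 s₀) : x ∈ Ioo (0 : ℝ) 1 := ⟨hx.1, hx.2.trans_lt hs₀.2⟩
  have hderiv {x : ℝ} (hx : x ∈ Ioc 0 s₀) :
      HasDerivAt (fun x ↦ timeMap g s₀ x + C⁻¹ * log (-log x))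
        ((g x)⁻¹ + C⁻¹ * -(negMulLog x)⁻¹) x :=
    (hasDerivAt_timeMap isOpen_Ioo hg hpos hs₀ (hmem hx)).add
      ((hasDerivAt_log_neg_log (hmem hx)).const_mul _)
  have hmono : MonotoneOn (fun x ↦ timeMap g s₀ x + C⁻¹ * log (-log x)) (Ioc 0 s₀) := by
    refine monotoneOn_of_deriv_nonneg (convex_Ioc _ _)
      (fun x hx ↦ (hderiv hx).continuousAt.continuousWithinAt)
      (fun x hx ↦ (hderiv (interior_subset hx)).differentiableAt.differentiableWithinAt)
      fun x hx ↦ ?_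
    replace hx := interior_subset hx
    rw [(hderiv hx).deriv, mul_neg, ← mul_inv, ← sub_eq_add_neg, sub_nonneg]
    exact inv_anti₀ (hpos x (hmem hx)) (hle x hx)
  have hbound : ∀ᶠ x in 𝓝[>] 0,
      timeMap g s₀ x ≤ C⁻¹ * log (-log s₀) - C⁻¹ * log (-log x) := by
    filter_upwards [Ioc_mem_nhdsGT hs₀.1] with x hx
    have h := hmono hx (right_mem_Ioc.2 hs₀.1) hx.2
    simp only [timeMap, intervalIntegral.integral_same, zero_add] at h
    exact le_sub_iff_add_le.2 h
  exact tendsto_atBot_mono' _ hbound (tendsto_atBot_add_const_left _ _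
    (tendsto_neg_atTop_atBot.comp (tendsto_log_neg_log_nhdsGT_zero.const_mul_atTop (inv_pos.2 hC))))

end UnitInterval

section Constraints

variable {s y z j k : ℝ}

lemma first_constraint_iff (hy : y ∈ Ioo (0 : ℝ) 1) (hz : z ∈ Ioo (0 : ℝ) 1) :
    -1 = y / log z * j + z / log y * k ↔
      negMulLog y * j + negMulLog z * k = log y * log z := by
  have hly := (log_neg hy.1 hy.2).ne
  have hlz := (log_neg hz.1 hz.2).ne
  rw [negMulLog, negMulLog]
  field_simp
  constructor <;> intro h <;> linear_combination h

lemma second_constraint_iff (hy : y ∈ Ioo (0 : ℝ) 1) (hz : z ∈ Ioo (0 : ℝ) 1) :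
    0 = (z * log z + y) / (z * log z ^ 2) * j - (y * log y + z) / (y * log y ^ 2) * k ↔
      (y - negMulLog z) * (y * log y ^ 2) * j = (z - negMulLog y) * (z * log z ^ 2) * k := by
  have hly := (log_neg hy.1 hy.2).ne
  have hlz := (log_neg hz.1 hz.2).ne
  have hy₀ := hy.1.ne'
  have hz₀ := hz.1.ne'
  rw [negMulLog, negMulLog]
  field_simp
  constructor <;> intro h <;> linear_combination -h

lemma binEntropy_sub_log_mul_log (s : ℝ) : binEntropy s - log s * log (1 - s) =
    -log s * (s - negMulLog (1 - s)) - log (1 - s) * (1 - s - negMulLog s) := by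
  rw [binEntropy_eq_negMulLog_add_negMulLog_one_sub, negMulLog, negMulLog]
  ring

lemma log_mul_log_one_sub_lt_binEntropy (hs : s ∈ Ioo (0 : ℝ) 1) :
    log s * log (1 - s) < binEntropy s := by
  have hs' := one_sub_mem_Ioo_s13 hs
  have hη : negMulLog (1 - s) < s := by simpa using negMulLog_lt_one_sub hs'
  rw [← sub_pos, binEntropy_sub_log_mul_log]
  linarith [mul_pos_of_neg_of_neg (log_neg hs.1 hs.2) (sub_neg.2 hη),
    mul_pos_of_neg_of_neg (log_neg hs'.1 hs'.2) (sub_neg.2 (negMulLog_lt_one_sub hs))]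

/-- The value which the two constraints force upon `K` at a point with `Z = s` and `Y = 1 - s`.
Since exchanging `(Y, J)` with `(Z, K)` preserves the constraints, `J` is `constraintRoot (1 - s)`
there. -/
noncomputable def constraintRoot (s : ℝ) : ℝ :=
  log (1 - s) ^ 2 * (1 - s - negMulLog s) / (s * (binEntropy s - log s * log (1 - s)))

lemma constraintRoot_one_sub (s : ℝ) : constraintRoot (1 - s) =
    log s ^ 2 * (s - negMulLog (1 - s)) / ((1 - s) * (binEntropy s - log s * log (1 - s))) := by
  rw [constraintRoot, binEntropy_one_sub, sub_sub_cancel, mul_comm (log (1 - s))]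

lemma constraints_iff (hs : s ∈ Ioo (0 : ℝ) 1) :
    (-1 = (1 - s) / log s * j + s / log (1 - s) * k ∧
      0 = (s * log s + (1 - s)) / (s * log s ^ 2) * j
        - ((1 - s) * log (1 - s) + s) / ((1 - s) * log (1 - s) ^ 2) * k) ↔
      j = constraintRoot (1 - s) ∧ k = constraintRoot s := by
  have hs' := one_sub_mem_Ioo_s13 hs
  have hs₀ := hs.1.ne'
  have hs₀' := hs'.1.ne'
  have hlog := (log_neg hs.1 hs.2).ne
  have hlog' := (log_neg hs'.1 hs'.2).ne
  have hdet := (sub_pos.2 (log_mul_log_one_sub_lt_binEntropy hs)).ne'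
  rw [first_constraint_iff hs' hs, second_constraint_iff hs' hs, constraintRoot_one_sub,
    constraintRoot, eq_div_iff (mul_ne_zero hs₀' hdet), eq_div_iff (mul_ne_zero hs₀ hdet),
    binEntropy_sub_log_mul_log]
  rw [binEntropy_sub_log_mul_log] at hdet
  -- Cramer's rule: the determinant is a multiple of `binEntropy s - log s * log (1 - s)`.
  constructor
  · rintro ⟨h₁, h₂⟩
    constructor
    · apply mul_left_cancel₀ hlog'
      simp only [negMulLog] at *
      linear_combination log s * (s - -(1 - s) * log (1 - s)) * h₁ - h₂
    · apply mul_left_cancel₀ hlog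
      simp only [negMulLog] at *
      linear_combination log (1 - s) * (1 - s - -s * log s) * h₁ + h₂
  · rintro ⟨hj, hk⟩
    constructor
    · apply mul_right_cancel₀ hdet
      simp only [negMulLog] at *
      linear_combination -log (1 - s) * hj - log s * hk
    · apply mul_right_cancel₀ hdet
      simp only [negMulLog] at *
      linear_combination (1 - s - -s * log s) * log (1 - s) ^ 2 * hj
       - (s - -(1 - s) * log (1 - s)) * log s ^ 2 * hk

lemma negMulLog_mul_constraintRoot_add (hs : s ∈ Ioo (0 : ℝ) 1) :
    negMulLog (1 - s) * constraintRoot (1 - s) + negMulLog s * constraintRoot s =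
      log s * log (1 - s) := by
  rw [mul_comm (log s)]
  exact (first_constraint_iff (one_sub_mem_Ioo_s13 hs) hs).1 ((constraints_iff hs).2 ⟨rfl, rfl⟩).1

lemma constraintRoot_pos (hs : s ∈ Ioo (0 : ℝ) 1) : 0 < constraintRoot s := by
  have hs' := one_sub_mem_Ioo_s13 hs
  exact div_pos
    (mul_pos (sq_pos_of_neg (log_neg hs'.1 hs'.2)) (sub_pos.2 (negMulLog_lt_one_sub hs)))
    (mul_pos hs.1 (sub_pos.2 (log_mul_log_one_sub_lt_binEntropy hs)))

lemma constraintRoot_one_half : constraintRoot (1 / 2) = log 2 := by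
  have h := negMulLog_mul_constraintRoot_add one_half_mem_Ioo
  rw [sub_half, negMulLog, one_div, log_inv, ← one_div] at h
  apply mul_left_cancel₀ (log_pos one_lt_two).ne'
  linear_combination h

lemma constraintRoot_mul_one_sub_lt_one (hs : s ∈ Ioo (0 : ℝ) 1) :
    constraintRoot s * (1 - s) < 1 := by
  have hs' := one_sub_mem_Ioo_s13 hs
  have hroot : s * constraintRoot s < -log (1 - s) := by
    have h := negMulLog_mul_constraintRoot_add hs
    have hJ := mul_pos (negMulLog_pos hs') (constraintRoot_pos hs')
    have hη : negMulLog s = -log s * s := by rw [negMulLog]; ring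
    refine lt_of_mul_lt_mul_left ?_ (neg_pos.2 (log_neg hs.1 hs.2)).le
    rw [hη] at h
    linarith
  refine lt_of_mul_lt_mul_left ?_ hs.1.le
  calc s * (constraintRoot s * (1 - s)) = s * constraintRoot s * (1 - s) := by ring
    _ < -log (1 - s) * (1 - s) := mul_lt_mul_of_pos_right hroot hs'.1
    _ = negMulLog (1 - s) := by rw [negMulLog]; ring
    _ < s * 1 := by simpa using negMulLog_lt_one_sub hs'

lemma continuousOn_constraintRoot : ContinuousOn constraintRoot (Ioo 0 1) := by
  intro s hs
  have hs₀ := hs.1.ne'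
  have hs₀' := (one_sub_mem_Ioo_s13 hs).1.ne'
  have hdet := (sub_pos.2 (log_mul_log_one_sub_lt_binEntropy hs)).ne'
  refine ContinuousAt.continuousWithinAt ?_
  unfold constraintRoot
  fun_prop (disch := positivity)

end Constraints

section ReducedEquation

variable {s : ℝ}

/-- The derivative of `log Q` with respect to `Z` along a solution. -/
noncomputable def logMomentumSlope (s : ℝ) : ℝ := (1 - constraintRoot s) / negMulLog (1 - s)

/-- The value of `log Q` when `Z = s`, and of `log P` when `Y = s`. -/
noncomputable def logMomentum (s : ℝ) : ℝ := ∫ x in (1 / 2)..s, logMomentumSlope x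

/-- The value of `Z'` when `Z = s`. -/
noncomputable def speed (s : ℝ) : ℝ := log 2 * exp (logMomentum s) * negMulLog s

lemma continuousOn_logMomentumSlope : ContinuousOn logMomentumSlope (Ioo 0 1) :=
  (continuousOn_const.sub continuousOn_constraintRoot).div (by fun_prop)
    fun _ hs ↦ (negMulLog_pos (one_sub_mem_Ioo_s13 hs)).ne'

lemma neg_four_le_logMomentumSlope (hs : s ∈ Ioo (0 : ℝ) 1) (hs' : s ≤ 1 / 2) :
    -4 ≤ logMomentumSlope s := by
  have h₁ := one_sub_mem_Ioo_s13 hs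
  have hroot : constraintRoot s - 1 ≤ 2 * s := by
    nlinarith [constraintRoot_mul_one_sub_lt_one hs, h₁.1, mul_nonneg hs.1.le (sub_nonneg.2 hs')]
  have hη : s / 2 ≤ negMulLog (1 - s) := by
    have h := log_le_sub_one_of_pos h₁.1
    rw [negMulLog]
    nlinarith [h₁.1, hs.1]
  rw [logMomentumSlope, le_div_iff₀ (negMulLog_pos h₁)]
  linarith

lemma hasDerivAt_logMomentum (hs : s ∈ Ioo (0 : ℝ) 1) :
    HasDerivAt logMomentum (logMomentumSlope s) s :=
  hasDerivAt_integral_of_continuousOn continuousOn_logMomentumSlope isOpen_Ioo one_half_mem_Ioo hs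

lemma logMomentum_one_half : logMomentum (1 / 2) = 0 := intervalIntegral.integral_same

lemma logMomentum_le_two (hs : s ∈ Ioc (0 : ℝ) (1 / 2)) : logMomentum s ≤ 2 := by
  have hderiv {x : ℝ} (hx : x ∈ Ioc (0 : ℝ) (1 / 2)) :=
    hasDerivAt_logMomentum (s := x) ⟨hx.1, by linarith [hx.2]⟩
  have h := (convex_Ioc (0 : ℝ) (1 / 2)).mul_sub_le_image_sub_of_le_deriv (C := -4)
    (fun x hx ↦ (hderiv hx).continuousAt.continuousWithinAt)
    (fun x hx ↦ (hderiv (interior_subset hx)).differentiableAt.differentiableWithinAt)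
    (fun x hx ↦ by
      replace hx := interior_subset hx
      rw [(hderiv hx).deriv]
      exact neg_four_le_logMomentumSlope ⟨hx.1, by linarith [hx.2]⟩ hx.2)
    s hs (1 / 2) ⟨one_half_pos, le_rfl⟩ hs.2
  rw [logMomentum_one_half] at h
  linarith [hs.1]

lemma speed_pos (hs : s ∈ Ioo (0 : ℝ) 1) : 0 < speed s :=
  mul_pos (mul_pos (log_pos one_lt_two) (exp_pos _)) (negMulLog_pos hs)

lemma continuousOn_speed : ContinuousOn speed (Ioo 0 1) := by
  have h : ContinuousOn logMomentum (Ioo 0 1) := fun s hs ↦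
    (hasDerivAt_logMomentum hs).continuousAt.continuousWithinAt
  unfold speed
  fun_prop

lemma speed_le (hs : s ∈ Ioc (0 : ℝ) (1 / 2)) : speed s ≤ log 2 * exp 2 * negMulLog s := by
  have hη := negMulLog_pos (s := s) ⟨hs.1, by linarith [hs.2]⟩
  have hexp := exp_le_exp.2 (logMomentum_le_two hs)
  unfold speed
  gcongr

/-- Up to sign, both sides are logarithmic derivatives of `speed`; their equality is the first
constraint. -/
lemma logDeriv_speed_one_sub (hs : s ∈ Ioo (0 : ℝ) 1) :
    logMomentumSlope s + (-log s - 1) / negMulLog s =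
      -(logMomentumSlope (1 - s) + (-log (1 - s) - 1) / negMulLog (1 - s)) := by
  have hη := (negMulLog_pos hs).ne'
  have hη' := (negMulLog_pos (one_sub_mem_Ioo_s13 hs)).ne'
  have h := negMulLog_mul_constraintRoot_add hs
  rw [logMomentumSlope, logMomentumSlope, sub_sub_cancel]
  field_simp
  simp only [negMulLog] at h ⊢
  linear_combination -h

lemma logMomentum_add_log_negMulLog_one_sub (hs : s ∈ Ioo (0 : ℝ) 1) :
    logMomentum (1 - s) + log (negMulLog (1 - s)) = logMomentum s + log (negMulLog s) := by
  have hderiv {x : ℝ} (hx : x ∈ Ioo (0 : ℝ) 1) :=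
    (hasDerivAt_logMomentum hx).add (hasDerivAt_log_negMulLog hx)
  have hderiv' {x : ℝ} (hx : x ∈ Ioo (0 : ℝ) 1) :=
    HasDerivAt.comp_const_sub 1 x (hderiv (one_sub_mem_Ioo_s13 hx))
  refine isOpen_Ioo.eqOn_of_deriv_eq isPreconnected_Ioo
    (fun x hx ↦ (hderiv' hx).differentiableAt.differentiableWithinAt)
    (fun x hx ↦ (hderiv hx).differentiableAt.differentiableWithinAt) (fun x hx ↦ ?_)
    one_half_mem_Ioo (by norm_num) hs
  rw [(hderiv' hx).deriv, (hderiv hx).deriv, logDeriv_speed_one_sub hx]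

lemma speed_one_sub (hs : s ∈ Ioo (0 : ℝ) 1) : speed (1 - s) = speed s := by
  have hexp {x : ℝ} (hx : x ∈ Ioo (0 : ℝ) 1) :
      speed x = log 2 * exp (logMomentum x + log (negMulLog x)) := by
    rw [exp_add, exp_log (negMulLog_pos hx), ← mul_assoc, speed]
  rw [hexp (one_sub_mem_Ioo_s13 hs), hexp hs, logMomentum_add_log_negMulLog_one_sub hs]

lemma timeMap_speed_one_sub (hs : s ∈ Ioo (0 : ℝ) 1) :
    timeMap speed (1 / 2) (1 - s) = -timeMap speed (1 / 2) s := by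
  have htwo : (2 : ℝ) * (1 / 2) = 1 := by norm_num
  have h := timeMap_two_mul_sub (g := speed) (s₀ := 1 / 2) (s := s) fun x hx ↦ by
    rw [htwo, speed_one_sub (ordConnected_Ioo.uIcc_subset one_half_mem_Ioo hs hx)]
  rwa [htwo] at h

lemma surjOn_timeMap_speed : SurjOn (timeMap speed (1 / 2)) (Ioo 0 1) univ := by
  have hzero : Tendsto (timeMap speed (1 / 2)) (𝓝[>] 0) atBot :=
    tendsto_timeMap_nhdsGT_zero_of_le_mul_negMulLog continuousOn_speed (fun _ ↦ speed_pos)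
      one_half_mem_Ioo (mul_pos (log_pos one_lt_two) (exp_pos 2)) fun _ ↦ speed_le
  have hone : Tendsto (timeMap speed (1 / 2)) (𝓝[<] 1) atTop := by
    have hsub : Tendsto (fun s : ℝ ↦ 1 - s) (𝓝[<] 1) (𝓝[>] 0) := by
      refine tendsto_nhdsWithin_of_tendsto_nhds_of_eventually_within _
        (((continuous_const.sub continuous_id).tendsto' _ _ (sub_self 1)).mono_left
          nhdsWithin_le_nhds) ?_
      filter_upwards [self_mem_nhdsWithin] with s (hs : s < 1) using sub_pos.2 hs
    refine (tendsto_neg_atBot_atTop.comp (hzero.comp hsub)).congr' ?_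
    filter_upwards [Ioo_mem_nhdsLT one_pos] with s hs
    simp only [Function.comp_apply, timeMap_speed_one_sub hs, neg_neg]
  refine ContinuousOn.surjOn_of_tendsto ⟨_, one_half_mem_Ioo⟩ (fun s hs ↦
    (hasDerivAt_timeMap isOpen_Ioo continuousOn_speed (fun _ ↦ speed_pos) one_half_mem_Ioo
      hs).continuousAt.continuousWithinAt) ?_ ?_
  · rwa [tendsto_comp_coe_Ioo_atBot one_pos]
  · rwa [tendsto_comp_coe_Ioo_atTop one_pos]

theorem existsUnique_isGlobalSolution_speed :
    ∃! Z, IsGlobalSolution speed (Ioo 0 1) (1 / 2) Z :=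
  existsUnique_isGlobalSolution isOpen_Ioo continuousOn_speed (fun _ ↦ speed_pos)
    one_half_mem_Ioo surjOn_timeMap_speed

end ReducedEquation

section Existence

variable {Z : ℝ → ℝ}

lemma logMomentumSlope_mul_speed {s : ℝ} (hs : s ∈ Ioo (0 : ℝ) 1) :
    logMomentumSlope s * speed s =
      log 2 * (1 - constraintRoot s) * exp (logMomentum (1 - s)) := by
  have hη := (negMulLog_pos (one_sub_mem_Ioo_s13 hs)).ne'
  rw [← speed_one_sub hs, logMomentumSlope, speed]
  field_simp

/-- The tuple `(Y, Z, P, Q, J, K)` which a solution `Z` of the reduced equation `Z' = speed Z`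
determines. -/
noncomputable def solutionTuple (Z : ℝ → ℝ) :
    (ℝ → ℝ) × (ℝ → ℝ) × (ℝ → ℝ) × (ℝ → ℝ) × (ℝ → ℝ) × (ℝ → ℝ) :=
  (fun t ↦ 1 - Z t, Z, fun t ↦ exp (logMomentum (1 - Z t)), fun t ↦ exp (logMomentum (Z t)),
    fun t ↦ constraintRoot (1 - Z t), fun t ↦ constraintRoot (Z t))

lemma IsGlobalSolution.hasDerivAt_exp_logMomentum (hZ : IsGlobalSolution speed (Ioo 0 1) (1 / 2) Z)
    (t : ℝ) : HasDerivAt (fun t ↦ exp (logMomentum (Z t)))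
      (log 2 * (1 - constraintRoot (Z t)) * exp (logMomentum (1 - Z t)) *
        exp (logMomentum (Z t))) t := by
  refine (((hasDerivAt_logMomentum (hZ.mem t)).comp t (hZ.hasDerivAt t)).exp).congr_deriv ?_
  rw [logMomentumSlope_mul_speed (hZ.mem t), mul_comm, Function.comp_apply]

lemma IsGlobalSolution.hasDerivAt_exp_logMomentum_one_sub
    (hZ : IsGlobalSolution speed (Ioo 0 1) (1 / 2) Z) (t : ℝ) :
    HasDerivAt (fun t ↦ exp (logMomentum (1 - Z t)))
      (-log 2 * (1 - constraintRoot (1 - Z t)) * exp (logMomentum (1 - Z t)) *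
        exp (logMomentum (Z t))) t := by
  have hslope := logMomentumSlope_mul_speed (one_sub_mem_Ioo_s13 (hZ.mem t))
  rw [speed_one_sub (hZ.mem t), sub_sub_cancel] at hslope
  refine (((hasDerivAt_logMomentum (one_sub_mem_Ioo_s13 (hZ.mem t))).comp t
    ((hZ.hasDerivAt t).const_sub 1)).exp).congr_deriv ?_
  rw [mul_neg, hslope, Function.comp_apply]
  ring

lemma IsGlobalSolution.ivpSol_solutionTuple (hZ : IsGlobalSolution speed (Ioo 0 1) (1 / 2) Z) :
    IVPSol (solutionTuple Z).1 (solutionTuple Z).2.1 (solutionTuple Z).2.2.1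
      (solutionTuple Z).2.2.2.1 (solutionTuple Z).2.2.2.2.1 (solutionTuple Z).2.2.2.2.2 := by
  have hY' (t : ℝ) : HasDerivAt (fun t ↦ 1 - Z t)
      (log 2 * exp (logMomentum (1 - Z t)) * (1 - Z t) * log (1 - Z t)) t :=
    ((hZ.hasDerivAt t).const_sub 1).congr_deriv
      (by rw [← speed_one_sub (hZ.mem t), speed, negMulLog]; ring)
  have hZ' (t : ℝ) : HasDerivAt Z (-log 2 * exp (logMomentum (Z t)) * Z t * log (Z t)) t :=
    (hZ.hasDerivAt t).congr_deriv (by rw [speed, negMulLog]; ring)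
  have hP' := hZ.hasDerivAt_exp_logMomentum_one_sub
  have hQ' := hZ.hasDerivAt_exp_logMomentum
  have hconstraints (t : ℝ) := (constraints_iff (hZ.mem t)).2 ⟨rfl, rfl⟩
  refine ⟨fun t ↦ (hY' t).differentiableAt, fun t ↦ (hZ' t).differentiableAt,
    fun t ↦ (hP' t).differentiableAt, fun t ↦ (hQ' t).differentiableAt,
    fun t ↦ one_sub_mem_Ioo_s13 (hZ.mem t), hZ.mem, ?_, hZ.apply_zero, ?_, ?_, ?_, ?_,
    fun t ↦ (hY' t).deriv, fun t ↦ (hZ' t).deriv, fun t ↦ (hP' t).deriv, fun t ↦ (hQ' t).deriv,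
    fun t ↦ (hconstraints t).1, fun t ↦ (hconstraints t).2⟩ <;>
  simp only [solutionTuple, hZ.apply_zero, sub_half, logMomentum_one_half,
    constraintRoot_one_half, exp_zero]

end Existence

section Uniqueness

variable {Y Z P Q J K : ℝ → ℝ}

namespace IVPSol

lemma mem_Y (h : IVPSol Y Z P Q J K) (t : ℝ) : Y t ∈ Ioo (0 : ℝ) 1 := h.2.2.2.2.1 t

lemma mem_Z (h : IVPSol Y Z P Q J K) (t : ℝ) : Z t ∈ Ioo (0 : ℝ) 1 := h.2.2.2.2.2.1 t

lemma hasDerivAt_Y (h : IVPSol Y Z P Q J K) (t : ℝ) :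
    HasDerivAt Y (-(log 2 * (P t * negMulLog (Y t)))) t := by
  obtain ⟨hY, _, _, _, _, _, _, _, _, _, _, _, hY', _⟩ := h
  refine (hY t).hasDerivAt.congr_deriv ?_
  rw [hY', negMulLog]
  ring

lemma hasDerivAt_Z (h : IVPSol Y Z P Q J K) (t : ℝ) :
    HasDerivAt Z (log 2 * (Q t * negMulLog (Z t))) t := by
  obtain ⟨_, hZ, _, _, _, _, _, _, _, _, _, _, _, hZ', _⟩ := h
  refine (hZ t).hasDerivAt.congr_deriv ?_
  rw [hZ', negMulLog]
  ring

lemma hasDerivAt_P (h : IVPSol Y Z P Q J K) (t : ℝ) :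
    HasDerivAt P (-log 2 * (1 - J t) * P t * Q t) t := by
  obtain ⟨_, _, hP, _, _, _, _, _, _, _, _, _, _, _, hP', _⟩ := h
  exact (hP t).hasDerivAt.congr_deriv (hP' t)

lemma hasDerivAt_Q (h : IVPSol Y Z P Q J K) (t : ℝ) :
    HasDerivAt Q (log 2 * (1 - K t) * P t * Q t) t := by
  obtain ⟨_, _, _, hQ, _, _, _, _, _, _, _, _, _, _, _, hQ', _⟩ := h
  exact (hQ t).hasDerivAt.congr_deriv (hQ' t)

lemma constraints (h : IVPSol Y Z P Q J K) (t : ℝ) :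
    -1 = Y t / log (Z t) * J t + Z t / log (Y t) * K t ∧
      0 = (Z t * log (Z t) + Y t) / (Z t * log (Z t) ^ 2) * J t
        - (Y t * log (Y t) + Z t) / (Y t * log (Y t) ^ 2) * K t := by
  obtain ⟨_, _, _, _, _, _, _, _, _, _, _, _, _, _, _, _, h₁, h₂⟩ := h
  exact ⟨h₁ t, h₂ t⟩

/-- The first constraint makes the derivative a combination of the function itself and of
`Y + Z - 1`. -/
lemma hasDerivAt_mul_negMulLog_sub (h : IVPSol Y Z P Q J K) (t : ℝ) :
    HasDerivAt (fun t ↦ P t * negMulLog (Y t) - Q t * negMulLog (Z t))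
      (log 2 * (P t - Q t - ((P t * negMulLog (Y t) + Q t * negMulLog (Z t)) * Z t
          - Q t * negMulLog (Z t)) / (Y t * Z t)) *
          (P t * negMulLog (Y t) - Q t * negMulLog (Z t)) +
        -(log 2 * (Q t * negMulLog (Z t)) ^ 2 / (Y t * Z t)) * (Y t + Z t - 1)) t := by
  have hY := (h.mem_Y t).1.ne'
  have hZ := (h.mem_Z t).1.ne'
  have hPη := (h.hasDerivAt_P t).mul ((hasDerivAt_negMulLog hY).comp t (h.hasDerivAt_Y t))
  have hQη := (h.hasDerivAt_Q t).mul ((hasDerivAt_negMulLog hZ).comp t (h.hasDerivAt_Z t))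
  have hconstraint := (first_constraint_iff (h.mem_Y t) (h.mem_Z t)).1 (h.constraints t).1
  refine (hPη.sub hQη).congr_deriv ?_
  simp only [negMulLog, Function.comp_apply] at hconstraint ⊢
  field_simp
  linear_combination P t * Q t * Y t * hconstraint

lemma invariants (h : IVPSol Y Z P Q J K) (t : ℝ) :
    Y t + Z t - 1 = 0 ∧ P t * negMulLog (Y t) - Q t * negMulLog (Z t) = 0 := by
  have hY : Continuous Y := h.1.continuous
  have hZ : Continuous Z := h.2.1.continuous
  have hP : Continuous P := h.2.2.1.continuous
  have hQ : Continuous Q := h.2.2.2.1.continuous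
  have hYZ (t : ℝ) : Y t * Z t ≠ 0 := mul_ne_zero (h.mem_Y t).1.ne' (h.mem_Z t).1.ne'
  have hsum (t : ℝ) : HasDerivAt (fun t ↦ Y t + Z t - 1)
      (-log 2 * (P t * negMulLog (Y t) - Q t * negMulLog (Z t))) t :=
    (((h.hasDerivAt_Y t).add (h.hasDerivAt_Z t)).sub_const 1).congr_deriv (by ring)
  obtain ⟨_, _, _, _, _, _, hY₀, hZ₀, hP₀, hQ₀, _⟩ := id h
  exact eq_zero_of_hasDerivAt_planar_linear (t₀ := 0) (by fun_prop (disch := exact hYZ _))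
    (by fun_prop (disch := exact hYZ _)) hsum h.hasDerivAt_mul_negMulLog_sub
    (by norm_num [hY₀, hZ₀]) (by rw [hY₀, hZ₀, hP₀, hQ₀, sub_self]) t

lemma Y_eq (h : IVPSol Y Z P Q J K) (t : ℝ) : Y t = 1 - Z t := by
  linear_combination (h.invariants t).1

lemma P_mul_negMulLog (h : IVPSol Y Z P Q J K) (t : ℝ) :
    P t * negMulLog (1 - Z t) = Q t * negMulLog (Z t) := by
  rw [← h.Y_eq, ← sub_eq_zero]
  exact (h.invariants t).2

lemma J_eq_and_K_eq (h : IVPSol Y Z P Q J K) (t : ℝ) :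
    J t = constraintRoot (1 - Z t) ∧ K t = constraintRoot (Z t) := by
  rw [← constraints_iff (h.mem_Z t), ← h.Y_eq]
  exact h.constraints t

lemma Q_eq (h : IVPSol Y Z P Q J K) (t : ℝ) : Q t = exp (logMomentum (Z t)) := by
  have hderiv (t : ℝ) : HasDerivAt (fun t ↦ Q t * exp (-logMomentum (Z t))) 0 t := by
    have hη := (negMulLog_pos (one_sub_mem_Ioo_s13 (h.mem_Z t))).ne'
    refine ((h.hasDerivAt_Q t).mul (((hasDerivAt_logMomentum (h.mem_Z t)).comp t
      (h.hasDerivAt_Z t)).neg.exp)).congr_deriv ?_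
    rw [← h.P_mul_negMulLog, (h.J_eq_and_K_eq t).2, logMomentumSlope]
    simp only [Pi.neg_apply, Function.comp_apply]
    field_simp
    ring
  have hconst := is_const_of_deriv_eq_zero (fun t ↦ (hderiv t).differentiableAt)
    (fun t ↦ (hderiv t).deriv) t 0
  obtain ⟨_, _, _, _, _, _, _, hZ₀, _, hQ₀, _⟩ := h
  rwa [hZ₀, hQ₀, logMomentum_one_half, neg_zero, exp_zero, mul_one, exp_neg,
    mul_inv_eq_one₀ (exp_ne_zero _)] at hconst

lemma P_eq (h : IVPSol Y Z P Q J K) (t : ℝ) : P t = exp (logMomentum (1 - Z t)) := by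
  apply mul_right_cancel₀ (negMulLog_pos (one_sub_mem_Ioo_s13 (h.mem_Z t))).ne'
  apply mul_left_cancel₀ (log_pos one_lt_two).ne'
  rw [h.P_mul_negMulLog, h.Q_eq, ← mul_assoc, ← mul_assoc]
  exact (speed_one_sub (h.mem_Z t)).symm

lemma isGlobalSolution_speed (h : IVPSol Y Z P Q J K) :
    IsGlobalSolution speed (Ioo 0 1) (1 / 2) Z where
  mem := h.mem_Z
  apply_zero := by
    obtain ⟨_, _, _, _, _, _, _, hZ₀, _⟩ := h
    exact hZ₀
  hasDerivAt t := by
    rw [speed, ← h.Q_eq, mul_assoc]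
    exact h.hasDerivAt_Z t

lemma eq_solutionTuple (h : IVPSol Y Z P Q J K) : (Y, Z, P, Q, J, K) = solutionTuple Z := by
  simp only [solutionTuple, ← funext h.Y_eq, ← funext h.P_eq, ← funext h.Q_eq,
    ← funext fun t ↦ (h.J_eq_and_K_eq t).1, ← funext fun t ↦ (h.J_eq_and_K_eq t).2]

end IVPSol

end Uniqueness

/-- The IVP admits a unique global-in-time solution. -/
theorem stmt_13 :
    ∃! s : (ℝ → ℝ) × (ℝ → ℝ) × (ℝ → ℝ) × (ℝ → ℝ) × (ℝ → ℝ) × (ℝ → ℝ),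
      IVPSol s.1 s.2.1 s.2.2.1 s.2.2.2.1 s.2.2.2.2.1 s.2.2.2.2.2 := by
  obtain ⟨Z, hZ, hZ_unique⟩ := existsUnique_isGlobalSolution_speed
  refine ⟨solutionTuple Z, hZ.ivpSol_solutionTuple, ?_⟩
  rintro ⟨Y, Z', P, Q, J, K⟩ h
  rw [IVPSol.eq_solutionTuple h, hZ_unique Z' (IVPSol.isGlobalSolution_speed h)]
end
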